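/- arXiv:1302.3492 — 2 statements merged into one kernel-verified Lean document; each statement's English description precedes it below -/
import Mathlib

section
/- Let (X,Y) have joint pmf P_{XY} on finite alphabets with full-support marginals, and for each n ≥ 1 let (X^n, Y^n) denote n i.i.d. copies of (X,Y), so that the joint pmf of (X^n,Y^n) is the n-fold product P_{XY}^{⊗n}. Then s*(X^n; Y^n) = s*(X;Y) for every n ≥ 1 (tensorization of s*). -/
open scoped BigOperators

noncomputable section

/-- A probability mass function on a finite type, as a real-valued function. -/
def IsPMF {α : Type*} [Fintype α] (p : α → ℝ) : Prop :=
  (∀ a, 0 ≤ p a) ∧ ∑ a, p a = 1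

/-- Kullback–Leibler divergence `D(q ‖ p)` between pmfs on a finite type. -/
def klDiv {α : Type*} [Fintype α] (q p : α → ℝ) : ℝ :=
  ∑ a, q a * Real.logb 2 (q a / p a)

variable {𝓧 𝓨 : Type*} [Fintype 𝓧] [Fintype 𝓨]

/-- x-marginal of a joint pmf. -/
def margX (P : 𝓧 → 𝓨 → ℝ) (x : 𝓧) : ℝ := ∑ y, P x y

/-- y-marginal of a joint pmf. -/
def margY (P : 𝓧 → 𝓨 → ℝ) (y : 𝓨) : ℝ := ∑ x, P x y

/-- Output distribution of channel `P_{Y|X}` (from joint pmf `P`) driven by input `Q`. -/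
def chanOut (P : 𝓧 → 𝓨 → ℝ) (Q : 𝓧 → ℝ) (y : 𝓨) : ℝ :=
  ∑ x, Q x * (P x y / margX P x)

/-- `s*(X;Y)`, for `(X,Y)` with joint pmf `P`. -/
def sStar (P : 𝓧 → 𝓨 → ℝ) : ℝ :=
  sSup { r : ℝ | ∃ Q : 𝓧 → ℝ, IsPMF Q ∧ Q ≠ margX P ∧
    r = klDiv (chanOut P Q) (margY P) / klDiv Q (margX P) }

/-- Mutual information `I(X;Y)` of a joint pmf. -/
def mutualInfo (P : 𝓧 → 𝓨 → ℝ) : ℝ :=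
  ∑ x, ∑ y, P x y * Real.logb 2 (P x y / (margX P x * margY P y))

/-- swapped joint pmf, for `s*(Y;X)` etc. -/
def swap (P : 𝓧 → 𝓨 → ℝ) : 𝓨 → 𝓧 → ℝ := fun y x => P x y

/-- n-fold memoryless extension of a joint source. -/
def iid (P : 𝓧 → 𝓨 → ℝ) (n : ℕ) : (Fin n → 𝓧) → (Fin n → 𝓨) → ℝ :=
  fun xs ys => ∏ i, P (xs i) (ys i)

/-! For two independent sources, `s*` of the pair is the maximum of the two values of `s*`. Write
`D(Q_{Y Y'} ‖ P_Y P_{Y'}) = D(Q_Y ‖ P_Y) + D(Q_{Y'|Y} ‖ P_{Y'} | Q_Y)`. The first term is at most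
`s D(Q_X ‖ P_X)`. In the second one the contraction of the second channel replaces `Y'` by `X'`,
and then convexity of the divergence replaces the conditioning variable `Y` by `X`; the two bounds
add up to `s D(Q_{X X'} ‖ P_X P_{X'})`. Conversely, inputs of the form `Q ⊗ P_{X'}` have the same
ratio of divergences as `Q`. Tensorization follows by splitting off one copy at a time.

Conditional laws are kept unnormalized, as slices `Q (x, ·)` of the joint law, so that no division
by a vanishing marginal occurs. -/

section Divergence

variable {α β ι : Type*} [Fintype α] [Fintype β] [Fintype ι]

theorem klDiv_self (p : α → ℝ) : klDiv p p = 0 :=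
  Finset.sum_eq_zero fun a _ => by
    by_cases h : p a = 0 <;> simp [h]

theorem klDiv_comp_equiv (e : β ≃ α) (q p : α → ℝ) : klDiv (q ∘ e) (p ∘ e) = klDiv q p :=
  e.sum_comp fun a => q a * Real.logb 2 (q a / p a)

theorem mul_logb_mul_div_mul_left (b w x y : ℝ) :
    w * x * Real.logb b (w * x / (w * y)) = w * (x * Real.logb b (x / y)) := by
  by_cases hw : w = 0
  · simp [hw]
  · rw [mul_div_mul_left _ _ hw, mul_assoc]

theorem klDiv_smul_smul (c : ℝ) (q p : α → ℝ) : klDiv (c • q) (c • p) = c * klDiv q p := by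
  simp only [klDiv, Pi.smul_apply, smul_eq_mul, mul_logb_mul_div_mul_left, Finset.mul_sum]

theorem klDiv_smul_smul_self (x y : ℝ) (w : β → ℝ) :
    klDiv (x • w) (y • w) = (∑ b, w b) * (x * Real.logb 2 (x / y)) := by
  simp only [klDiv, Pi.smul_apply, smul_eq_mul, mul_comm _ (w _), mul_logb_mul_div_mul_left,
    Finset.sum_mul]

theorem klDiv_mul_mul_right (q p : α → ℝ) (w : β → ℝ) :
    klDiv (fun x : α × β => q x.1 * w x.2) (fun x => p x.1 * w x.2) = (∑ b, w b) * klDiv q p := by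
  calc klDiv (fun x : α × β => q x.1 * w x.2) (fun x => p x.1 * w x.2)
      = ∑ a, klDiv (q a • w) (p a • w) := Fintype.sum_prod_type _
    _ = (∑ b, w b) * klDiv q p := by
        simp only [klDiv_smul_smul_self, ← Finset.mul_sum]
        rfl

theorem sum_mul_logb_sum_div_sum_le {a b : ι → ℝ} (ha : ∀ i, 0 ≤ a i) (hb : ∀ i, 0 ≤ b i)
    (hab : ∀ i, b i = 0 → a i = 0) :
    (∑ i, a i) * Real.logb 2 ((∑ i, a i) / ∑ i, b i) ≤ klDiv a b := by
  have hB : 0 ≤ ∑ i, b i := Fintype.sum_nonneg hb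
  rcases hB.eq_or_lt with hB | hB
  · have hb0 : b = 0 := (Fintype.sum_eq_zero_iff_of_nonneg hb).1 hB.symm
    have ha0 : a = 0 := funext fun i => hab i (congrFun hb0 i)
    simp [klDiv, ha0]
  have mul_ratio (i : ι) : b i * (a i / b i) = a i := mul_div_cancel_of_imp' (hab i)
  -- Jensen for `x log x` at the points `a i / b i` with weights `b i / ∑ b`.
  have jensen := Real.convexOn_mul_log.map_sum_le (t := Finset.univ)
    (w := fun i => b i / ∑ j, b j) (p := fun i => a i / b i)
    (fun i _ => div_nonneg (hb i) hB.le) (by rw [← Finset.sum_div, div_self hB.ne'])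
    (fun i _ => div_nonneg (ha i) (hb i))
  simp only [smul_eq_mul, div_mul_eq_mul_div (b _), ← mul_assoc, mul_ratio,
    ← Finset.sum_div] at jensen
  rw [div_mul_eq_mul_div, div_le_div_iff_of_pos_right hB] at jensen
  simp only [klDiv, Real.logb, ← mul_div_assoc, ← Finset.sum_div]
  exact div_le_div_of_nonneg_right jensen (Real.log_nonneg one_le_two)

theorem klDiv_sum_le {q p : ι → α → ℝ} (hq : ∀ i a, 0 ≤ q i a) (hp : ∀ i a, 0 ≤ p i a)
    (hqp : ∀ i a, p i a = 0 → q i a = 0) :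
    klDiv (∑ i, q i) (∑ i, p i) ≤ ∑ i, klDiv (q i) (p i) := by
  unfold klDiv
  rw [Finset.sum_comm]
  refine Finset.sum_le_sum fun a _ => ?_
  simpa only [Finset.sum_apply] using!
    sum_mul_logb_sum_div_sum_le (fun i => hq i a) (fun i => hp i a) (fun i => hqp i a)

theorem klDiv_nonneg {q p : α → ℝ} (hq : IsPMF q) (hp : IsPMF p)
    (hqp : ∀ a, p a = 0 → q a = 0) : 0 ≤ klDiv q p := by
  simpa [hq.2, hp.2] using sum_mul_logb_sum_div_sum_le hq.1 hp.1 hqp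

/-- The conditional divergence `D(R_{B|A} ‖ p | R_A)` of a joint law `R` on `α × β` from a law `p`
on `β`. The slice `R a` is compared with `p` scaled to the mass of that slice, which avoids
dividing by `margX R a`. -/
def condKLDiv (R : α → β → ℝ) (p : β → ℝ) : ℝ :=
  ∑ a, klDiv (R a) (margX R a • p)

theorem klDiv_eq_klDiv_margX_add_condKLDiv {Q : α × β → ℝ} (hQ : ∀ x, 0 ≤ Q x)
    {p : α → ℝ} {p' : β → ℝ} (hp : ∀ a, p a ≠ 0) (hp' : ∀ b, p' b ≠ 0) :
    klDiv Q (fun x => p x.1 * p' x.2) =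
      klDiv (margX (Function.curry Q)) p + condKLDiv (Function.curry Q) p' := by
  simp only [klDiv, condKLDiv, Fintype.sum_prod_type, ← Finset.sum_add_distrib]
  refine Finset.sum_congr rfl fun a _ => ?_
  set m := margX (Function.curry Q) a
  have marginal_term : m * Real.logb 2 (m / p a) = ∑ b, Q (a, b) * Real.logb 2 (m / p a) :=
    Finset.sum_mul ..
  rw [marginal_term, ← Finset.sum_add_distrib]
  refine Finset.sum_congr rfl fun b _ => ?_
  simp only [Function.curry_apply, Pi.smul_apply, smul_eq_mul]
  rcases (hQ (a, b)).eq_or_lt with h | h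
  · simp [← h]
  have hm0 : m ≠ 0 := (h.trans_le <|
    Finset.single_le_sum (fun b _ => hQ (a, b)) (Finset.mem_univ b)).ne'
  have hpa := hp a
  have hpb := hp' b
  rw [← mul_add, ← Real.logb_mul (by positivity) (by positivity)]
  congr 2
  field_simp

end Divergence

section Channel

/-- The transition probabilities `P_{Y|X}(y|x)` of a joint pmf `P`. -/
def condProb (P : 𝓧 → 𝓨 → ℝ) (x : 𝓧) (y : 𝓨) : ℝ := P x y / margX P x

omit [Fintype 𝓧] in
theorem condProb_nonneg {P : 𝓧 → 𝓨 → ℝ} (hP : ∀ x y, 0 ≤ P x y) (x : 𝓧) (y : 𝓨) :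
    0 ≤ condProb P x y :=
  div_nonneg (hP x y) (Fintype.sum_nonneg (hP x))

omit [Fintype 𝓧] in
theorem sum_condProb {P : 𝓧 → 𝓨 → ℝ} {x : 𝓧} (hx : margX P x ≠ 0) :
    ∑ y, condProb P x y = 1 := by
  unfold condProb
  rw [← Finset.sum_div]
  exact div_self hx

theorem chanOut_eq_sum_smul (P : 𝓧 → 𝓨 → ℝ) (Q : 𝓧 → ℝ) :
    chanOut P Q = ∑ x, Q x • condProb P x := by
  ext y
  simp [chanOut, condProb]

theorem chanOut_smul (P : 𝓧 → 𝓨 → ℝ) (c : ℝ) (Q : 𝓧 → ℝ) :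
    chanOut P (c • Q) = c • chanOut P Q := by
  simp [chanOut_eq_sum_smul, Finset.smul_sum, mul_smul]

theorem chanOut_nonneg {P : 𝓧 → 𝓨 → ℝ} (hP : ∀ x y, 0 ≤ P x y) {Q : 𝓧 → ℝ}
    (hQ : ∀ x, 0 ≤ Q x) (y : 𝓨) : 0 ≤ chanOut P Q y :=
  Fintype.sum_nonneg fun x => mul_nonneg (hQ x) (condProb_nonneg hP x y)

variable {P : 𝓧 → 𝓨 → ℝ} (hX : ∀ x, margX P x ≠ 0)
include hX

theorem sum_chanOut (Q : 𝓧 → ℝ) : ∑ y, chanOut P Q y = ∑ x, Q x := by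
  simp only [chanOut_eq_sum_smul, Finset.sum_apply, Pi.smul_apply, smul_eq_mul]
  rw [Finset.sum_comm]
  simp only [← Finset.mul_sum, sum_condProb (hX _), mul_one]

omit [Fintype 𝓧] in
theorem margX_smul_condProb (x : 𝓧) : margX P x • condProb P x = P x :=
  funext fun y => mul_div_cancel₀ (P x y) (hX x)

theorem chanOut_margX : chanOut P (margX P) = margY P := by
  ext y
  simp [chanOut_eq_sum_smul, margX_smul_condProb hX, margY]

theorem klDiv_chanOut_le (hP : ∀ x y, 0 ≤ P x y) {Q : 𝓧 → ℝ} (hQ : ∀ x, 0 ≤ Q x) :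
    klDiv (chanOut P Q) (margY P) ≤ klDiv Q (margX P) := by
  have hW := condProb_nonneg hP
  rw [← chanOut_margX hX, chanOut_eq_sum_smul, chanOut_eq_sum_smul]
  calc klDiv (∑ x, Q x • condProb P x) (∑ x, margX P x • condProb P x)
      ≤ ∑ x, klDiv (Q x • condProb P x) (margX P x • condProb P x) :=
        klDiv_sum_le (fun x y => mul_nonneg (hQ x) (hW x y))
          (fun x y => mul_nonneg (Fintype.sum_nonneg (hP x)) (hW x y))
          (fun x y h => by simp [(smul_eq_zero_iff_right (hX x)).1 h])
    _ = klDiv Q (margX P) := by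
        simp only [klDiv_smul_smul_self, sum_condProb (hX _), one_mul]
        rfl

end Channel

/-- A joint pmf both of whose marginals have full support. Its total mass is written as the mass of
its x-marginal. -/
structure IsSource (P : 𝓧 → 𝓨 → ℝ) : Prop where
  nonneg : ∀ x y, 0 ≤ P x y
  sum_margX : ∑ x, margX P x = 1
  margX_pos : ∀ x, 0 < margX P x
  margY_pos : ∀ y, 0 < margY P y

namespace IsSource

variable {P : 𝓧 → 𝓨 → ℝ} (hP : IsSource P)
include hP

theorem margX_ne_zero (x : 𝓧) : margX P x ≠ 0 := (hP.margX_pos x).ne'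

theorem margY_ne_zero (y : 𝓨) : margY P y ≠ 0 := (hP.margY_pos y).ne'

theorem isPMF_margX : IsPMF (margX P) := ⟨fun x => (hP.margX_pos x).le, hP.sum_margX⟩

theorem isPMF_chanOut {Q : 𝓧 → ℝ} (hQ : IsPMF Q) : IsPMF (chanOut P Q) :=
  ⟨chanOut_nonneg hP.nonneg hQ.1, (sum_chanOut hP.margX_ne_zero Q).trans hQ.2⟩

theorem isPMF_margY : IsPMF (margY P) :=
  chanOut_margX hP.margX_ne_zero ▸ hP.isPMF_chanOut hP.isPMF_margX

theorem klDiv_margX_nonneg {Q : 𝓧 → ℝ} (hQ : IsPMF Q) : 0 ≤ klDiv Q (margX P) :=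
  klDiv_nonneg hQ hP.isPMF_margX fun x h => absurd h (hP.margX_ne_zero x)

theorem klDiv_margY_nonneg {Q : 𝓨 → ℝ} (hQ : IsPMF Q) : 0 ≤ klDiv Q (margY P) :=
  klDiv_nonneg hQ hP.isPMF_margY fun y h => absurd h (hP.margY_ne_zero y)

end IsSource

/-- The strong data processing inequality with constant `s`: the channel `P_{Y|X}` contracts the
divergence from `P_X` by the factor `s`. -/
def StrongDPI (P : 𝓧 → 𝓨 → ℝ) (s : ℝ) : Prop :=
  ∀ Q : 𝓧 → ℝ, IsPMF Q → klDiv (chanOut P Q) (margY P) ≤ s * klDiv Q (margX P)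

theorem sStar_nonneg {P : 𝓧 → 𝓨 → ℝ} (hP : IsSource P) : 0 ≤ sStar P := by
  apply Real.sSup_nonneg
  rintro _ ⟨Q, hQ, -, rfl⟩
  exact div_nonneg (hP.klDiv_margY_nonneg (hP.isPMF_chanOut hQ)) (hP.klDiv_margX_nonneg hQ)

theorem strongDPI_sStar {P : 𝓧 → 𝓨 → ℝ} (hP : IsSource P) : StrongDPI P (sStar P) := by
  intro Q hQ
  have dpi {Q : 𝓧 → ℝ} (hQ : IsPMF Q) : klDiv (chanOut P Q) (margY P) ≤ klDiv Q (margX P) :=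
    klDiv_chanOut_le hP.margX_ne_zero hP.nonneg hQ.1
  rcases (hP.klDiv_margX_nonneg hQ).eq_or_lt with hD | hD
  · simpa [← hD] using dpi hQ
  rw [← div_le_iff₀ hD]
  refine le_csSup ⟨1, ?_⟩ ⟨Q, hQ, ?_, rfl⟩
  · rintro _ ⟨Q, hQ, -, rfl⟩
    exact div_le_one_of_le₀ (dpi hQ) (hP.klDiv_margX_nonneg hQ)
  · rintro rfl
    exact hD.ne' (klDiv_self _)

theorem sStar_le_iff_strongDPI {P : 𝓧 → 𝓨 → ℝ} (hP : IsSource P) {s : ℝ} (hs : 0 ≤ s) :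
    sStar P ≤ s ↔ StrongDPI P s := by
  refine ⟨fun h Q hQ => (strongDPI_sStar hP Q hQ).trans ?_, fun h => Real.sSup_le ?_ hs⟩
  · exact mul_le_mul_of_nonneg_right h (hP.klDiv_margX_nonneg hQ)
  · rintro _ ⟨Q, hQ, -, rfl⟩
    exact div_le_of_le_mul₀ (hP.klDiv_margX_nonneg hQ) hs (h Q hQ)

theorem sStar_eq_zero_of_unique [Unique 𝓧] {P : 𝓧 → 𝓨 → ℝ} (hP : ∑ x, margX P x = 1) :
    sStar P = 0 := by
  suffices h : ∀ Q : 𝓧 → ℝ, IsPMF Q → Q = margX P by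
    unfold sStar
    convert Real.sSup_empty
    exact Set.eq_empty_of_forall_notMem fun _ ⟨Q, hQ, hne, _⟩ => hne (h Q hQ)
  intro Q hQ
  have hQ1 : Q default = 1 := by simpa using hQ.2
  have hP1 : margX P default = 1 := by simpa using hP
  ext x
  rw [Unique.eq_default x, hQ1, hP1]

theorem StrongDPI.klDiv_chanOut_le_of_nonneg {P : 𝓧 → 𝓨 → ℝ} {s : ℝ} (h : StrongDPI P s)
    {v : 𝓧 → ℝ} (hv : ∀ x, 0 ≤ v x) :
    klDiv (chanOut P v) ((∑ x, v x) • margY P) ≤ s * klDiv v ((∑ x, v x) • margX P) := by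
  generalize hc : ∑ x, v x = c
  have hc0 : 0 ≤ c := hc ▸ Fintype.sum_nonneg hv
  rcases hc0.eq_or_lt with rfl | hc0
  · have hv0 : v = 0 := (Fintype.sum_eq_zero_iff_of_nonneg hv).1 hc
    simp [klDiv, chanOut, hv0]
  have hQ : IsPMF (c⁻¹ • v) :=
    ⟨fun x => mul_nonneg (inv_nonneg.2 hc0.le) (hv x), by
      simp [← Finset.mul_sum, hc, hc0.ne']⟩
  rw [← smul_inv_smul₀ hc0.ne' v, chanOut_smul, klDiv_smul_smul, klDiv_smul_smul, mul_left_comm]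
  exact mul_le_mul_of_nonneg_left (h _ hQ) hc0.le

theorem StrongDPI.condKLDiv_chanOut_le {ι : Type*} [Fintype ι] {P : 𝓧 → 𝓨 → ℝ} {s : ℝ}
    (h : StrongDPI P s) (hX : ∀ x, margX P x ≠ 0) {R : ι → 𝓧 → ℝ} (hR : ∀ i x, 0 ≤ R i x) :
    condKLDiv (fun i => chanOut P (R i)) (margY P) ≤ s * condKLDiv R (margX P) := by
  have mass (i : ι) : margX (fun i => chanOut P (R i)) i = ∑ x, R i x := sum_chanOut hX (R i)
  simp only [condKLDiv, mass, Finset.mul_sum]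
  exact Finset.sum_le_sum fun i _ => h.klDiv_chanOut_le_of_nonneg (hR i)

section Product

variable {𝓧' 𝓨' β : Type*} [Fintype 𝓧'] [Fintype 𝓨'] [Fintype β]

/-- The joint law of `(Y, B)` obtained by passing the first coordinate of a joint law `R` of
`(X, B)` through the channel `P_{Y|X}`. -/
def chanOutFst (P : 𝓧 → 𝓨 → ℝ) (R : 𝓧 → β → ℝ) : 𝓨 → β → ℝ :=
  fun y b => chanOut P (fun x => R x b) y

omit [Fintype β] in
theorem chanOutFst_eq_sum_smul (P : 𝓧 → 𝓨 → ℝ) (R : 𝓧 → β → ℝ) (y : 𝓨) :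
    chanOutFst P R y = ∑ x, condProb P x y • R x := by
  ext b
  simp [chanOutFst, chanOut_eq_sum_smul, mul_comm]

theorem margX_chanOutFst (P : 𝓧 → 𝓨 → ℝ) (R : 𝓧 → β → ℝ) :
    margX (chanOutFst P R) = chanOut P (margX R) := by
  ext y
  simp only [margX, chanOutFst, chanOut, Finset.sum_mul]
  exact Finset.sum_comm

theorem condKLDiv_chanOutFst_le {P : 𝓧 → 𝓨 → ℝ} (hP : ∀ x y, 0 ≤ P x y)
    (hX : ∀ x, margX P x ≠ 0) {R : 𝓧 → β → ℝ} (hR : ∀ x b, 0 ≤ R x b) {p : β → ℝ}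
    (hp : ∀ b, 0 < p b) : condKLDiv (chanOutFst P R) p ≤ condKLDiv R p := by
  have hW := condProb_nonneg hP
  have hm (x : 𝓧) : 0 ≤ margX R x := Fintype.sum_nonneg (hR x)
  have hRm (x : 𝓧) (b : β) (h : margX R x * p b = 0) : R x b = 0 :=
    congrFun ((Fintype.sum_eq_zero_iff_of_nonneg (hR x)).1
      ((mul_eq_zero_iff_right (hp b).ne').1 h)) b
  have slice (y : 𝓨) : klDiv (chanOutFst P R y) (margX (chanOutFst P R) y • p) ≤
      ∑ x, condProb P x y * klDiv (R x) (margX R x • p) := by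
    have mass : margX (chanOutFst P R) y • p = ∑ x, condProb P x y • margX R x • p := by
      simp only [margX_chanOutFst, chanOut_eq_sum_smul, Finset.sum_apply, Pi.smul_apply,
        smul_eq_mul, Finset.sum_smul, smul_smul, mul_comm]
    simp only [chanOutFst_eq_sum_smul P R y, mass, ← klDiv_smul_smul]
    refine klDiv_sum_le (fun x b => mul_nonneg (hW x y) (hR x b))
      (fun x b => mul_nonneg (hW x y) (mul_nonneg (hm x) (hp b).le)) fun x b h => ?_
    rcases mul_eq_zero.1 h with h | h
    · simp [h]
    · simp [hRm x b h]
  calc condKLDiv (chanOutFst P R) p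
      ≤ ∑ y, ∑ x, condProb P x y * klDiv (R x) (margX R x • p) :=
        Finset.sum_le_sum fun y _ => slice y
    _ = condKLDiv R p := by
        rw [Finset.sum_comm]
        simp only [← Finset.sum_mul, sum_condProb (hX _), one_mul, condKLDiv]

/-- The joint pmf of `((X, X'), (Y, Y'))` for independent sources `(X, Y)` and `(X', Y')`. -/
def prodSource {α β α' β' : Type*} (P : α → β → ℝ) (P' : α' → β' → ℝ) :
    α × α' → β × β' → ℝ :=
  fun x y => P x.1 y.1 * P' x.2 y.2

omit [Fintype 𝓧] [Fintype 𝓧'] in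
theorem margX_prodSource (P : 𝓧 → 𝓨 → ℝ) (P' : 𝓧' → 𝓨' → ℝ) :
    margX (prodSource P P') = fun x => margX P x.1 * margX P' x.2 := by
  ext x
  simp only [margX, prodSource, Fintype.sum_prod_type, Finset.sum_mul_sum]

omit [Fintype 𝓨] [Fintype 𝓨'] in
theorem margY_prodSource (P : 𝓧 → 𝓨 → ℝ) (P' : 𝓧' → 𝓨' → ℝ) :
    margY (prodSource P P') = fun y => margY P y.1 * margY P' y.2 := by
  ext y
  simp only [margY, prodSource, Fintype.sum_prod_type, Finset.sum_mul_sum]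

theorem curry_chanOut_prodSource (P : 𝓧 → 𝓨 → ℝ) (P' : 𝓧' → 𝓨' → ℝ) (Q : 𝓧 × 𝓧' → ℝ) :
    Function.curry (chanOut (prodSource P P') Q) =
      fun y => chanOut P' (chanOutFst P (Function.curry Q) y) := by
  ext y y'
  simp only [Function.curry_apply, chanOut, chanOutFst, margX_prodSource, prodSource,
    Fintype.sum_prod_type, Finset.sum_mul]
  rw [Finset.sum_comm]
  simp only [mul_div_mul_comm, mul_assoc]

theorem chanOut_prodSource_mul (P : 𝓧 → 𝓨 → ℝ) (P' : 𝓧' → 𝓨' → ℝ) (Q : 𝓧 → ℝ) (Q' : 𝓧' → ℝ) :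
    chanOut (prodSource P P') (fun x => Q x.1 * Q' x.2) =
      fun y => chanOut P Q y.1 * chanOut P' Q' y.2 := by
  ext y
  simp only [chanOut, margX_prodSource, prodSource, Fintype.sum_prod_type, Finset.sum_mul_sum]
  simp only [mul_div_mul_comm, mul_mul_mul_comm]

theorem IsPMF.mul {p : 𝓧 → ℝ} {p' : 𝓧' → ℝ} (hp : IsPMF p) (hp' : IsPMF p') :
    IsPMF fun x : 𝓧 × 𝓧' => p x.1 * p' x.2 :=
  ⟨fun x => mul_nonneg (hp.1 x.1) (hp'.1 x.2), by
    rw [Fintype.sum_prod_type, ← Finset.sum_mul_sum, hp.2, hp'.2, one_mul]⟩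

theorem IsPMF.margX_curry {Q : 𝓧 × β → ℝ} (hQ : IsPMF Q) : IsPMF (margX (Function.curry Q)) :=
  ⟨fun x => Fintype.sum_nonneg fun b => hQ.1 (x, b), (Fintype.sum_prod_type Q).symm.trans hQ.2⟩

variable {P : 𝓧 → 𝓨 → ℝ} {P' : 𝓧' → 𝓨' → ℝ}

theorem IsSource.prod (hP : IsSource P) (hP' : IsSource P') :
    IsSource (prodSource P P') where
  nonneg x y := mul_nonneg (hP.nonneg _ _) (hP'.nonneg _ _)
  sum_margX := margX_prodSource P P' ▸ (hP.isPMF_margX.mul hP'.isPMF_margX).2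
  margX_pos x := by
    rw [margX_prodSource]
    exact mul_pos (hP.margX_pos x.1) (hP'.margX_pos x.2)
  margY_pos y := by
    rw [margY_prodSource]
    exact mul_pos (hP.margY_pos y.1) (hP'.margY_pos y.2)

theorem StrongDPI.prod (hP : IsSource P) (hP' : IsSource P') {s : ℝ} (hs : 0 ≤ s)
    (h : StrongDPI P s) (h' : StrongDPI P' s) : StrongDPI (prodSource P P') s := by
  intro Q hQ
  have hR : ∀ x x', 0 ≤ Function.curry Q x x' := fun x x' => hQ.1 (x, x')
  have hS : ∀ y x', 0 ≤ chanOutFst P (Function.curry Q) y x' :=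
    fun y x' => chanOut_nonneg hP.nonneg (fun x => hR x x') y
  have margX_out : margX (fun y => chanOut P' (chanOutFst P (Function.curry Q) y)) =
      chanOut P (margX (Function.curry Q)) := by
    rw [← margX_chanOutFst]
    exact funext fun y => sum_chanOut hP'.margX_ne_zero _
  have conditional_bound :
      condKLDiv (fun y => chanOut P' (chanOutFst P (Function.curry Q) y)) (margY P') ≤
        s * condKLDiv (Function.curry Q) (margX P') :=
    (h'.condKLDiv_chanOut_le hP'.margX_ne_zero hS).trans <| mul_le_mul_of_nonneg_left
      (condKLDiv_chanOutFst_le hP.nonneg hP.margX_ne_zero hR hP'.margX_pos) hs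
  rw [margX_prodSource, margY_prodSource,
    klDiv_eq_klDiv_margX_add_condKLDiv hQ.1 hP.margX_ne_zero hP'.margX_ne_zero,
    klDiv_eq_klDiv_margX_add_condKLDiv (chanOut_nonneg (hP.prod hP').nonneg hQ.1)
      hP.margY_ne_zero hP'.margY_ne_zero,
    curry_chanOut_prodSource, margX_out, mul_add]
  exact add_le_add (h _ hQ.margX_curry) conditional_bound

theorem StrongDPI.of_prod_left (hP' : IsSource P') {s : ℝ}
    (h : StrongDPI (prodSource P P') s) : StrongDPI P s := by
  intro Q hQ
  have := h _ (hQ.mul hP'.isPMF_margX)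
  rwa [chanOut_prodSource_mul, chanOut_margX hP'.margX_ne_zero, margX_prodSource,
    margY_prodSource, klDiv_mul_mul_right, klDiv_mul_mul_right, hP'.isPMF_margX.2,
    hP'.isPMF_margY.2, one_mul, one_mul] at this

theorem sStar_comp_equiv (e : 𝓧' ≃ 𝓧) (f : 𝓨' ≃ 𝓨) (P : 𝓧 → 𝓨 → ℝ) :
    sStar (fun x y => P (e x) (f y)) = sStar P := by
  have margX_comp : margX (fun x y => P (e x) (f y)) = margX P ∘ e :=
    funext fun x => f.sum_comp (P (e x))
  have margY_comp : margY (fun x y => P (e x) (f y)) = margY P ∘ f :=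
    funext fun y => e.sum_comp (P · (f y))
  have chanOut_comp (Q : 𝓧 → ℝ) :
      chanOut (fun x y => P (e x) (f y)) (Q ∘ e) = chanOut P Q ∘ f := by
    ext y
    simp only [chanOut, margX_comp]
    exact e.sum_comp fun x => Q x * (P x (f y) / margX P x)
  have isPMF_comp (Q : 𝓧 → ℝ) : IsPMF (Q ∘ e) ↔ IsPMF Q :=
    and_congr (e.forall_congr_right (q := fun x => 0 ≤ Q x)) (by rw [← e.sum_comp Q]; rfl)
  unfold sStar
  congr 1
  ext r
  rw [Set.mem_ofPred, Set.mem_ofPred, (e.injective.surjective_comp_right (γ := ℝ)).exists]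
  simp only [isPMF_comp, margX_comp, margY_comp, chanOut_comp, klDiv_comp_equiv,
    e.surjective.injective_comp_right.ne_iff]

theorem sStar_prodSource_comm (P : 𝓧 → 𝓨 → ℝ) (P' : 𝓧' → 𝓨' → ℝ) :
    sStar (prodSource P P') = sStar (prodSource P' P) := by
  rw [← sStar_comp_equiv (Equiv.prodComm 𝓧 𝓧') (Equiv.prodComm 𝓨 𝓨') (prodSource P' P)]
  congr 1
  ext x y
  exact mul_comm _ _

theorem sStar_le_sStar_prodSource_left (hP : IsSource P) (hP' : IsSource P') :
    sStar P ≤ sStar (prodSource P P') :=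
  have h := hP.prod hP'
  (sStar_le_iff_strongDPI hP (sStar_nonneg h)).2 ((strongDPI_sStar h).of_prod_left hP')

theorem sStar_prodSource (hP : IsSource P) (hP' : IsSource P') :
    sStar (prodSource P P') = max (sStar P) (sStar P') := by
  have hmax : 0 ≤ max (sStar P) (sStar P') := (sStar_nonneg hP).trans (le_max_left _ _)
  apply le_antisymm
  · refine (sStar_le_iff_strongDPI (hP.prod hP') hmax).2 (.prod hP hP' hmax ?_ ?_)
    · exact (sStar_le_iff_strongDPI hP hmax).1 (le_max_left _ _)
    · exact (sStar_le_iff_strongDPI hP' hmax).1 (le_max_right _ _)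
  · refine max_le (sStar_le_sStar_prodSource_left hP hP') ?_
    rw [sStar_prodSource_comm]
    exact sStar_le_sStar_prodSource_left hP' hP

end Product

theorem iid_succ {α β : Type*} (P : α → β → ℝ) (n : ℕ) :
    iid P (n + 1) = fun x y => prodSource P (iid P n)
      ((Fin.consEquiv fun _ => α).symm x) ((Fin.consEquiv fun _ => β).symm y) := by
  ext x y
  exact Fin.prod_univ_succ _

omit [Fintype 𝓧] in
theorem margX_iid (P : 𝓧 → 𝓨 → ℝ) (n : ℕ) :
    margX (iid P n) = fun xs => ∏ i, margX P (xs i) :=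
  funext fun xs => (Fintype.prod_sum fun i y => P (xs i) y).symm

omit [Fintype 𝓨] in
theorem margY_iid (P : 𝓧 → 𝓨 → ℝ) (n : ℕ) :
    margY (iid P n) = fun ys => ∏ i, margY P (ys i) :=
  funext fun ys => (Fintype.prod_sum fun i x => P x (ys i)).symm

theorem isSource_iid {P : 𝓧 → 𝓨 → ℝ} (hP : IsSource P) (n : ℕ) : IsSource (iid P n) where
  nonneg xs ys := Finset.prod_nonneg fun i _ => hP.nonneg (xs i) (ys i)
  sum_margX := by
    rw [margX_iid, ← Fintype.prod_sum fun _ : Fin n => margX P]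
    simp only [hP.sum_margX, Finset.prod_const_one]
  margX_pos xs := by
    rw [margX_iid]
    exact Finset.prod_pos fun i _ => hP.margX_pos (xs i)
  margY_pos ys := by
    rw [margY_iid]
    exact Finset.prod_pos fun i _ => hP.margY_pos (ys i)

theorem sStar_iid_zero (P : 𝓧 → 𝓨 → ℝ) : sStar (iid P 0) = 0 :=
  sStar_eq_zero_of_unique (by simp [margX, iid])

theorem sStar_iid_succ {P : 𝓧 → 𝓨 → ℝ} (hP : IsSource P) (n : ℕ) :
    sStar (iid P (n + 1)) = max (sStar P) (sStar (iid P n)) := by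
  rw [iid_succ, sStar_comp_equiv, sStar_prodSource hP (isSource_iid hP n)]

/-- tensorization of `s*`.  For an i.i.d. pair source,
`s*(Xⁿ;Yⁿ) = s*(X;Y)` for every `n ≥ 1`. -/
theorem sStar_tensorization (P : 𝓧 → 𝓨 → ℝ)
    (hP : IsPMF (fun p : 𝓧 × 𝓨 => P p.1 p.2))
    (hX : ∀ x, 0 < margX P x) (hY : ∀ y, 0 < margY P y)
    (n : ℕ) (hn : 1 ≤ n) :
    sStar (iid P n) = sStar P := by
  have source : IsSource P :=
    ⟨fun x y => hP.1 (x, y), (Fintype.sum_prod_type _).symm.trans hP.2, hX, hY⟩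
  induction n, hn using Nat.le_induction with
  | base => rw [sStar_iid_succ source 0, sStar_iid_zero, max_eq_left (sStar_nonneg source)]
  | succ n _ ih => rw [sStar_iid_succ source n, ih, max_self]

end
end

section
/- Let ρ ∈ (0,1), let X ~ N(0,1), let Z ~ N(0,1) be independent of X, and set Y = ρX + √(1−ρ²)·Z, so that (X,Y) are jointly Gaussian, each with unit variance and correlation coefficient ρ, and P_Y = N(0,1). For a probability measure Q on ℝ, let Q_Y denote the law of ρX′ + √(1−ρ²)·Z where X′ ~ Q is independent of Z ~ N(0,1). Then sup { D(Q_Y ∥ P_Y) / D(Q ∥ P_X) : Q a probability measure on ℝ with 0 < D(Q ∥ P_X) < ∞ } = ρ², where D denotes Kullback–Leibler divergence between probability measures on ℝ. In particular, for jointly Gaussian unit-variance sources, s*(X;Y) = s*(Y;X) = ρ², hence ρ*(X,Y) = ρ². -/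
open MeasureTheory ProbabilityTheory
open scoped ENNReal

noncomputable section
attribute [local instance] Classical.propDecidable

/-- Kullback–Leibler divergence `D(μ ‖ ν) ∈ [0,∞]` between measures on `ℝ`, defined as
`∫ log (dμ/dν) dμ` when `μ ≪ ν` and this integral exists, and `+∞` otherwise. -/
def klM (μ ν : Measure ℝ) : ℝ≥0∞ :=
  if μ ≪ ν ∧ Integrable (llr μ ν) μ then ENNReal.ofReal (∫ x, llr μ ν x ∂μ) else ⊤

variable (ρ : ℝ)

/-- Output distribution of the additive Gaussian channel `Y = ρX′ + √(1−ρ²)Z`,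
`Z ~ N(0,1)` independent of `X′ ~ Q`. -/
def gaussChanOut (Q : Measure ℝ) : Measure ℝ :=
  Measure.map (fun p : ℝ × ℝ => ρ * p.1 + Real.sqrt (1 - ρ ^ 2) * p.2)
    (Q.prod (gaussianReal 0 1))

/-! The inequality `D(Q_Y ‖ P_Y) ≤ c D(Q ‖ P_X)` for all `Q` is dual, through the Donsker–Varadhan
formula, to a functional inequality for pairs of bounded continuous functions of `X` and `Y`. In
that form it is stable under products, continuous images and weak limits. For two uniform signs of
correlation `ρ` and `c = ρ²` it reduces to an inequality between power series compared
coefficientwise, and the central limit theorem carries it over to the Gaussian pair. The shifts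
`Q = N(m, 1)` attain the ratio `ρ²`. -/

open Filter Topology InformationTheory RealInnerProductSpace
open scoped BoundedContinuousFunction

section TwoPoint

lemma hasSum_two_point_entropy {x : ℝ} (hx : |x| < 1) :
    HasSum (fun k : ℕ => (x ^ 2) ^ (k + 1) / ((k + 1) * (2 * k + 1)))
      ((1 + x) * Real.log (1 + x) + (1 - x) * Real.log (1 - x)) := by
  obtain ⟨hx_lower, hx_upper⟩ := abs_lt.1 hx
  have hx_sq : |x ^ 2| < 1 := by rw [abs_sq]; exact (sq_lt_one_iff_abs_lt_one x).2 hx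
  have hlog : Real.log (1 - x ^ 2) = Real.log (1 + x) + Real.log (1 - x) := by
    rw [← Real.log_mul (by linarith) (by linarith)]
    ring_nf
  have hsum : HasSum
      (fun k : ℕ => x * (2 * (1 / (2 * k + 1)) * x ^ (2 * k + 1)) - (x ^ 2) ^ (k + 1) / (k + 1))
      (x * (Real.log (1 + x) - Real.log (1 - x)) - -Real.log (1 - x ^ 2)) :=
    ((Real.hasSum_log_sub_log_of_abs_lt_one hx).mul_left x).sub
      (Real.hasSum_pow_div_log_of_abs_lt_one hx_sq)
  convert hsum using 1
  · ext k
    field_simp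
    ring
  · rw [hlog]
    ring

lemma two_point_entropy_mul_le {r t : ℝ} (hr : |r| ≤ 1) (ht : |t| < 1) :
    (1 + r * t) * Real.log (1 + r * t) + (1 - r * t) * Real.log (1 - r * t) ≤
      r ^ 2 * ((1 + t) * Real.log (1 + t) + (1 - t) * Real.log (1 - t)) := by
  have hrt : |r * t| < 1 := by
    rw [abs_mul]
    exact (mul_le_of_le_one_left (abs_nonneg t) hr).trans_lt ht
  refine hasSum_le (fun k => ?_) (hasSum_two_point_entropy hrt)
    ((hasSum_two_point_entropy ht).mul_left (r ^ 2))
  have hpow : (r ^ 2) ^ (k + 1) ≤ r ^ 2 :=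
    pow_le_of_le_one (sq_nonneg r) ((sq_le_one_iff_abs_le_one r).2 hr) k.succ_ne_zero
  rw [mul_pow, mul_pow, ← mul_div_assoc]
  gcongr

lemma mul_le_mul_log_sub_add_exp {a : ℝ} (ha : 0 ≤ a) (u : ℝ) :
    a * u ≤ a * Real.log a - a + Real.exp u := by
  rcases ha.eq_or_lt with rfl | ha
  · simpa using (Real.exp_pos u).le
  · have hexp : a * (u - Real.log a + 1) ≤ a * Real.exp (u - Real.log a) :=
      mul_le_mul_of_nonneg_left (Real.add_one_le_exp _) ha.le
    rw [Real.exp_sub, Real.exp_log ha, mul_div_cancel₀ _ ha.ne'] at hexp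
    linarith

lemma two_point_gibbs {p q : ℝ} (hp : 0 ≤ p) (hq : 0 ≤ q) (hpq : p + q = 2) (u v : ℝ) :
    p * u + q * v ≤ p * Real.log p + q * Real.log q
      + 2 * Real.log ((Real.exp u + Real.exp v) / 2) := by
  set L := Real.log ((Real.exp u + Real.exp v) / 2) with hL
  have hexp : Real.exp (u - L) + Real.exp (v - L) = 2 := by
    rw [Real.exp_sub, Real.exp_sub, hL, Real.exp_log (by positivity)]
    field_simp
  have hp_le := mul_le_mul_log_sub_add_exp hp (u - L)
  have hq_le := mul_le_mul_log_sub_add_exp hq (v - L)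
  obtain rfl : q = 2 - p := by linarith
  linarith

lemma two_point_sdpi {r a b : ℝ} (hr : |r| ≤ 1) (ha : 0 < a) (hb : 0 < b) (u v : ℝ) :
    (1 + r) / 4 * (a * u + b * v) + (1 - r) / 4 * (a * v + b * u) ≤
      r ^ 2 * ((a * Real.log a + b * Real.log b) / 2 - (a + b) / 2 * Real.log ((a + b) / 2))
      + (a + b) / 2 * Real.log ((Real.exp u + Real.exp v) / 2) := by
  obtain ⟨m, t, hm, ht, rfl, rfl⟩ :
      ∃ m t : ℝ, 0 < m ∧ |t| < 1 ∧ a = m * (1 + t) ∧ b = m * (1 - t) := by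
    refine ⟨(a + b) / 2, (a - b) / (a + b), by positivity, ?_, by field_simp; ring,
      by field_simp; ring⟩
    rw [abs_div, abs_of_pos (add_pos ha hb), div_lt_one (by positivity), abs_lt]
    constructor <;> linarith
  obtain ⟨ht_lower, ht_upper⟩ := abs_lt.1 ht
  obtain ⟨hrt_lower, hrt_upper⟩ : -1 ≤ r * t ∧ r * t ≤ 1 :=
    abs_le.1 (abs_mul r t ▸ mul_le_one₀ hr (abs_nonneg t) ht.le)
  have hgibbs := two_point_gibbs (p := 1 + r * t) (q := 1 - r * t) (by linarith) (by linarith)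
    (by ring) u v
  have hle := mul_le_mul_of_nonneg_left
    (hgibbs.trans (add_le_add_left (two_point_entropy_mul_le hr ht) _)) (half_pos hm).le
  rw [Real.log_mul hm.ne' (by linarith), Real.log_mul hm.ne' (by linarith),
    show (m * (1 + t) + m * (1 - t)) / 2 = m by ring]
  linarith

end TwoPoint

section PartialIntegral

variable {Ω α : Type*} [TopologicalSpace Ω] [TopologicalSpace α]

/-- The bounded continuous function `x ↦ exp (f x)`. -/
def expBCF (f : α →ᵇ ℝ) : α →ᵇ ℝ :=
  .ofNormedAddCommGroup (fun x => Real.exp (f x)) (by fun_prop) (Real.exp ‖f‖) fun x => by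
    rw [Real.norm_eq_abs, Real.abs_exp]
    exact Real.exp_le_exp.2 ((le_abs_self _).trans (f.norm_coe_le_norm x))

@[simp]
lemma expBCF_apply (f : α →ᵇ ℝ) (x : α) : expBCF f x = Real.exp (f x) := rfl

variable [MeasurableSpace Ω] [OpensMeasurableSpace Ω] (P : Measure Ω) [IsProbabilityMeasure P]

lemma integral_exp_bcf_pos (f : Ω →ᵇ ℝ) : 0 < ∫ ω, Real.exp (f ω) ∂P :=
  integral_exp_pos ((expBCF f).integrable P)

lemma abs_integral_le_norm (f : Ω →ᵇ ℝ) : |∫ ω, f ω ∂P| ≤ ‖f‖ := by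
  simpa using f.norm_integral_le_norm (μ := P)

lemma abs_log_integral_exp_le_norm (f : Ω →ᵇ ℝ) :
    |Real.log (∫ ω, Real.exp (f ω) ∂P)| ≤ ‖f‖ := by
  have hbound (ω : Ω) : -‖f‖ ≤ f ω ∧ f ω ≤ ‖f‖ := abs_le.1 (f.norm_coe_le_norm ω)
  have hlower : Real.exp (-‖f‖) ≤ ∫ ω, Real.exp (f ω) ∂P := by
    simpa using integral_mono (integrable_const _) ((expBCF f).integrable P)
      fun ω => Real.exp_le_exp.2 (hbound ω).1
  have hupper : ∫ ω, Real.exp (f ω) ∂P ≤ Real.exp ‖f‖ := by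
    simpa using integral_mono ((expBCF f).integrable P) (integrable_const _)
      fun ω => Real.exp_le_exp.2 (hbound ω).2
  exact abs_le.2 ⟨(Real.le_log_iff_exp_le (integral_exp_bcf_pos P f)).2 hlower,
    (Real.log_le_iff_le_exp (integral_exp_bcf_pos P f)).2 hupper⟩

variable [FirstCountableTopology α]

lemma continuous_integral_prodMk (f : α × Ω →ᵇ ℝ) : Continuous fun x => ∫ ω, f (x, ω) ∂P :=
  continuous_of_dominated
    (fun _ => (f.continuous.comp (Continuous.prodMk_right _)).aestronglyMeasurable)
    (fun x => ae_of_all _ fun ω => f.norm_coe_le_norm (x, ω)) (integrable_const _)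
    (ae_of_all _ fun ω => f.continuous.comp (Continuous.prodMk_left ω))

/-- The bounded continuous function `x ↦ ∫ f (x, ω) ∂P`, obtained by integrating out the second
variable. -/
def integralSnd (f : α × Ω →ᵇ ℝ) : α →ᵇ ℝ :=
  .ofNormedAddCommGroup (fun x => ∫ ω, f (x, ω) ∂P) (continuous_integral_prodMk P f) ‖f‖ fun x =>
    (abs_integral_le_norm P (f.compContinuous ⟨_, Continuous.prodMk_right x⟩)).trans
      (f.norm_compContinuous_le _)

@[simp]
lemma integralSnd_apply (f : α × Ω →ᵇ ℝ) (x : α) : integralSnd P f x = ∫ ω, f (x, ω) ∂P := rfl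

/-- The bounded continuous function `x ↦ log ∫ exp (f (x, ω)) ∂P`, the free energy of `f` in its
second variable. -/
def logIntegralExpSnd (f : α × Ω →ᵇ ℝ) : α →ᵇ ℝ :=
  .ofNormedAddCommGroup (fun x => Real.log (∫ ω, Real.exp (f (x, ω)) ∂P))
    ((integralSnd P (expBCF f)).continuous.log fun x =>
      (integral_exp_bcf_pos P (f.compContinuous ⟨_, Continuous.prodMk_right x⟩)).ne') ‖f‖ fun x =>
    (abs_log_integral_exp_le_norm P (f.compContinuous ⟨_, Continuous.prodMk_right x⟩)).trans
      (f.norm_compContinuous_le _)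

lemma exp_logIntegralExpSnd (f : α × Ω →ᵇ ℝ) (x : α) :
    Real.exp (logIntegralExpSnd P f x) = ∫ ω, Real.exp (f (x, ω)) ∂P :=
  Real.exp_log (integral_exp_bcf_pos P (f.compContinuous ⟨_, Continuous.prodMk_right x⟩))

lemma integral_exp_logIntegralExpSnd [MeasurableSpace α] [OpensMeasurableSpace α]
    [SecondCountableTopology Ω] (μ : Measure α) [IsProbabilityMeasure μ] (f : α × Ω →ᵇ ℝ) :
    ∫ x, Real.exp (logIntegralExpSnd P f x) ∂μ = ∫ p, Real.exp (f p) ∂(μ.prod P) := by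
  simp only [exp_logIntegralExpSnd]
  exact (integral_prod _ ((expBCF f).integrable (μ.prod P))).symm

end PartialIntegral

/-- The entropy functional `Ent(F) = ∫ F log F - (∫ F) log (∫ F)` at `F = exp f`. -/
def entropyExp {Ω : Type*} [MeasurableSpace Ω] (P : Measure Ω) (f : Ω → ℝ) : ℝ :=
  ∫ ω, f ω * Real.exp (f ω) ∂P
    - (∫ ω, Real.exp (f ω) ∂P) * Real.log (∫ ω, Real.exp (f ω) ∂P)

/-- The strong data processing inequality `D(Q_Y ‖ P_Y) ≤ c D(Q ‖ P_X)` in dual form: with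
`dQ/dP_X` proportional to `exp φ`, the divergence `D(Q_Y ‖ P_Y)` is written as the supremum over
`g` of `∫ g dQ_Y - log ∫ exp g dP_Y` (Donsker–Varadhan), and the result is multiplied by
`∫ exp φ dP_X`. Testing against bounded continuous functions makes it stable under weak limits. -/
def DualSDPI {Ω α β : Type*} [MeasurableSpace Ω] [TopologicalSpace α] [TopologicalSpace β]
    (c : ℝ) (P : Measure Ω) (X : Ω → α) (Y : Ω → β) : Prop :=
  ∀ (φ : α →ᵇ ℝ) (g : β →ᵇ ℝ),
    ∫ ω, Real.exp (φ (X ω)) * g (Y ω) ∂P ≤ c * entropyExp P (φ ∘ X)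
      + (∫ ω, Real.exp (φ (X ω)) ∂P) * Real.log (∫ ω, Real.exp (g (Y ω)) ∂P)

namespace DualSDPI

variable {Ω α β : Type*} [MeasurableSpace Ω] [TopologicalSpace α] [TopologicalSpace β]
  {c : ℝ} {P : Measure Ω} {X : Ω → α} {Y : Ω → β}

lemma comp {α' β' : Type*} [TopologicalSpace α'] [TopologicalSpace β'] (h : DualSDPI c P X Y)
    {u : α → α'} {v : β → β'} (hu : Continuous u) (hv : Continuous v) :
    DualSDPI c P (u ∘ X) (v ∘ Y) :=
  fun φ g => h (φ.compContinuous ⟨u, hu⟩) (g.compContinuous ⟨v, hv⟩)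

lemma map_iff {Ω' : Type*} [MeasurableSpace Ω'] [TopologicalSpace Ω'] [OpensMeasurableSpace Ω']
    {T : Ω → Ω'} (hT : Measurable T) {X : Ω' → α} {Y : Ω' → β} (hX : Continuous X)
    (hY : Continuous Y) : DualSDPI c (P.map T) X Y ↔ DualSDPI c P (X ∘ T) (Y ∘ T) := by
  have hmap {f : Ω' → ℝ} (hf : Continuous f) : ∫ ω', f ω' ∂(P.map T) = ∫ ω, f (T ω) ∂P :=
    integral_map hT.aemeasurable hf.aestronglyMeasurable
  refine forall₂_congr fun φ g => ?_
  simp only [entropyExp, Function.comp_apply]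
  rw [hmap (f := fun ω => Real.exp (φ (X ω)) * g (Y ω)) (by fun_prop),
    hmap (f := fun ω => φ (X ω) * Real.exp (φ (X ω))) (by fun_prop),
    hmap (f := fun ω => Real.exp (φ (X ω))) (by fun_prop),
    hmap (f := fun ω => Real.exp (g (Y ω))) (by fun_prop)]

lemma dirac [MeasurableSingletonClass Ω] (ω : Ω) : DualSDPI c (Measure.dirac ω) X Y := by
  intro φ g
  simp [entropyExp, mul_comm]

section Topological

variable [TopologicalSpace Ω] [OpensMeasurableSpace Ω]

theorem of_tendsto {ι : Type*} {l : Filter ι} [l.NeBot] {P : ι → ProbabilityMeasure Ω}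
    {P₀ : ProbabilityMeasure Ω} (hP : Tendsto P l (𝓝 P₀)) (hX : Continuous X) (hY : Continuous Y)
    (h : ∀ i, DualSDPI c (P i : Measure Ω) X Y) : DualSDPI c (P₀ : Measure Ω) X Y := by
  intro φ g
  set φX : Ω →ᵇ ℝ := φ.compContinuous ⟨X, hX⟩
  set gY : Ω →ᵇ ℝ := g.compContinuous ⟨Y, hY⟩
  have hlim := ProbabilityMeasure.tendsto_iff_forall_integral_tendsto.1 hP
  have hφ := hlim (expBCF φX)
  have hlog (f : Ω →ᵇ ℝ) := (hlim (expBCF f)).log (integral_exp_bcf_pos (P₀ : Measure Ω) f).ne'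
  exact le_of_tendsto_of_tendsto' (hlim (expBCF φX * gY))
    ((((hlim (φX * expBCF φX)).sub (hφ.mul (hlog φX))).const_mul c).add (hφ.mul (hlog gY)))
    fun i => h i φ g

variable {Ω₁ Ω₂ α₁ α₂ β₁ β₂ : Type*} [TopologicalSpace Ω₁] [TopologicalSpace Ω₂]
  [MeasurableSpace Ω₁] [MeasurableSpace Ω₂] [OpensMeasurableSpace Ω₁] [OpensMeasurableSpace Ω₂]
  [FirstCountableTopology Ω₁] [SecondCountableTopology Ω₂]
  [TopologicalSpace α₁] [TopologicalSpace α₂] [TopologicalSpace β₁] [TopologicalSpace β₂]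
  {P₁ : Measure Ω₁} {P₂ : Measure Ω₂} [IsProbabilityMeasure P₁] [IsProbabilityMeasure P₂]
  {X₁ : Ω₁ → α₁} {Y₁ : Ω₁ → β₁} {X₂ : Ω₂ → α₂} {Y₂ : Ω₂ → β₂}

lemma integral_prod_le (h : DualSDPI c P₂ X₂ Y₂) (hX : Continuous X₂) (hY : Continuous Y₂)
    (φ : Ω₁ × α₂ →ᵇ ℝ) (g : Ω₁ × β₂ →ᵇ ℝ) :
    let φX : Ω₁ × Ω₂ →ᵇ ℝ := φ.compContinuous ⟨Prod.map id X₂, by fun_prop⟩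
    let gY : Ω₁ × Ω₂ →ᵇ ℝ := g.compContinuous ⟨Prod.map id Y₂, by fun_prop⟩
    let Φ : Ω₁ →ᵇ ℝ := logIntegralExpSnd P₂ φX
    let G : Ω₁ →ᵇ ℝ := logIntegralExpSnd P₂ gY
    ∫ ω, (expBCF φX * gY) ω ∂(P₁.prod P₂) ≤
      c * (∫ ω, (φX * expBCF φX) ω ∂(P₁.prod P₂) - ∫ ω, (expBCF Φ * Φ) ω ∂P₁)
      + ∫ ω, (expBCF Φ * G) ω ∂P₁ := by
  intro φX gY Φ G
  have hfubini (f : Ω₁ × Ω₂ →ᵇ ℝ) : ∫ ω, f ω ∂(P₁.prod P₂) = ∫ ω₁, integralSnd P₂ f ω₁ ∂P₁ :=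
    integral_prod _ (f.integrable _)
  have hconditional (ω₁ : Ω₁) :
      integralSnd P₂ (expBCF φX * gY) ω₁ ≤
        (c • (integralSnd P₂ (φX * expBCF φX) - expBCF Φ * Φ) + expBCF Φ * G) ω₁ := by
    have hexpΦ := exp_logIntegralExpSnd P₂ φX ω₁
    simp only [integralSnd_apply, BoundedContinuousFunction.mul_apply, expBCF_apply,
      BoundedContinuousFunction.coe_add, BoundedContinuousFunction.coe_smul,
      BoundedContinuousFunction.coe_sub, Pi.add_apply, Pi.sub_apply, smul_eq_mul, Φ, hexpΦ]
    exact h (φ.compContinuous ⟨_, Continuous.prodMk_right ω₁⟩)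
      (g.compContinuous ⟨_, Continuous.prodMk_right ω₁⟩)
  have hint (f : Ω₁ →ᵇ ℝ) : Integrable f P₁ := f.integrable P₁
  rw [hfubini, hfubini]
  calc ∫ ω₁, integralSnd P₂ (expBCF φX * gY) ω₁ ∂P₁
      ≤ ∫ ω₁, (c • (integralSnd P₂ (φX * expBCF φX) - expBCF Φ * Φ) + expBCF Φ * G) ω₁ ∂P₁ :=
        integral_mono (hint _) (hint _) hconditional
    _ = ∫ ω₁, (c • (integralSnd P₂ (φX * expBCF φX) - expBCF Φ * Φ)) ω₁ ∂P₁
        + ∫ ω₁, (expBCF Φ * G) ω₁ ∂P₁ :=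
        integral_add (hint (c • (integralSnd P₂ (φX * expBCF φX) - expBCF Φ * Φ))) (hint _)
    _ = _ := by
        rw [← integral_sub (hint _) (hint _), ← integral_const_mul]
        rfl

variable [FirstCountableTopology α₁] [FirstCountableTopology β₁]

/-- The inequality for `(X₂, Y₂)` holds conditionally on `ω₁` and produces the free energies of `φ`
and `g` in the second variable, which the inequality for `(X₁, Y₁)` then takes as test
functions. -/
theorem prod (h₁ : DualSDPI c P₁ X₁ Y₁) (h₂ : DualSDPI c P₂ X₂ Y₂) (hX₁ : Continuous X₁)
    (hY₁ : Continuous Y₁) (hX₂ : Continuous X₂) (hY₂ : Continuous Y₂) :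
    DualSDPI c (P₁.prod P₂) (Prod.map X₁ X₂) (Prod.map Y₁ Y₂) := by
  intro φ g
  set φX : Ω₁ × Ω₂ →ᵇ ℝ := φ.compContinuous ⟨Prod.map X₁ X₂, by fun_prop⟩
  set gY : Ω₁ × Ω₂ →ᵇ ℝ := g.compContinuous ⟨Prod.map Y₁ Y₂, by fun_prop⟩
  set Φ : Ω₁ →ᵇ ℝ := logIntegralExpSnd P₂ φX
  set G : Ω₁ →ᵇ ℝ := logIntegralExpSnd P₂ gY
  have hconditional : ∫ ω, (expBCF φX * gY) ω ∂(P₁.prod P₂) ≤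
      c * (∫ ω, (φX * expBCF φX) ω ∂(P₁.prod P₂) - ∫ ω, (expBCF Φ * Φ) ω ∂P₁)
      + ∫ ω, (expBCF Φ * G) ω ∂P₁ :=
    h₂.integral_prod_le hX₂ hY₂ (φ.compContinuous ⟨Prod.map X₁ id, by fun_prop⟩)
      (g.compContinuous ⟨Prod.map Y₁ id, by fun_prop⟩)
  have hmarginal : ∫ ω, (expBCF Φ * G) ω ∂P₁ ≤
      c * (∫ ω, (Φ * expBCF Φ) ω ∂P₁
        - (∫ ω, Real.exp (Φ ω) ∂P₁) * Real.log (∫ ω, Real.exp (Φ ω) ∂P₁))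
      + (∫ ω, Real.exp (Φ ω) ∂P₁) * Real.log (∫ ω, Real.exp (G ω) ∂P₁) :=
    h₁ (logIntegralExpSnd P₂ (φ.compContinuous ⟨Prod.map id X₂, by fun_prop⟩))
      (logIntegralExpSnd P₂ (g.compContinuous ⟨Prod.map id Y₂, by fun_prop⟩))
  rw [integral_exp_logIntegralExpSnd, integral_exp_logIntegralExpSnd, mul_comm Φ] at hmarginal
  have htotal : ∫ ω, (expBCF φX * gY) ω ∂(P₁.prod P₂) ≤
      c * (∫ ω, (φX * expBCF φX) ω ∂(P₁.prod P₂)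
        - (∫ ω, Real.exp (φX ω) ∂(P₁.prod P₂)) * Real.log (∫ ω, Real.exp (φX ω) ∂(P₁.prod P₂)))
      + (∫ ω, Real.exp (φX ω) ∂(P₁.prod P₂)) * Real.log (∫ ω, Real.exp (gY ω) ∂(P₁.prod P₂)) := by
    linarith
  exact htotal

end Topological

end DualSDPI

section ConvolutionPower

variable {E : Type*} [AddMonoid E] [MeasurableSpace E]

/-- The `n`-fold convolution power of `μ`, the law of a sum of `n` independent copies. -/
def convPow (μ : Measure E) : ℕ → Measure E
  | 0 => Measure.dirac 0
  | n + 1 => (convPow μ n).conv μ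

instance isProbabilityMeasure_convPow [MeasurableAdd₂ E] (μ : Measure E) [IsProbabilityMeasure μ] :
    ∀ n, IsProbabilityMeasure (convPow μ n)
  | 0 => Measure.dirac.isProbabilityMeasure
  | n + 1 =>
    have := isProbabilityMeasure_convPow μ n
    Measure.probabilitymeasure_of_probabilitymeasures_conv _ _

end ConvolutionPower

section CentralLimit

variable {E : Type*} [NormedAddCommGroup E] [InnerProductSpace ℝ E] [MeasurableSpace E]
  [BorelSpace E]

lemma charFun_smul_eq_charFun_map_inner (μ : Measure E) (s : ℝ) (t : E) :
    charFun μ (s • t) = charFun (μ.map fun x => ⟪t, x⟫) s := by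
  rw [charFun_apply, charFun_apply_real, integral_map (by fun_prop) (by fun_prop)]
  simp only [inner_smul_right, real_inner_comm, Complex.ofReal_mul]

lemma charFun_convPow [SecondCountableTopology E] (μ : Measure E) [IsProbabilityMeasure μ] (t : E) :
    ∀ n, charFun (convPow μ n) t = charFun μ t ^ n
  | 0 => by simp [convPow, charFun_dirac]
  | n + 1 => by rw [convPow, charFun_conv, charFun_convPow μ t n, pow_succ]

lemma tendsto_charFun_pow_gaussianReal {Ω : Type*} [MeasurableSpace Ω] {P : Measure Ω}
    [IsProbabilityMeasure P] {X : Ω → ℝ} (hX : MemLp X 2 P) (hmean : ∫ ω, X ω ∂P = 0) (t : ℝ) :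
    Tendsto (fun n : ℕ => charFun (P.map X) ((√n)⁻¹ * t) ^ n) atTop
      (𝓝 (charFun (gaussianReal 0 (∫ ω, X ω ^ 2 ∂P).toNNReal) t)) := by
  have hvar_nonneg : 0 ≤ ∫ ω, X ω ^ 2 ∂P := integral_nonneg fun ω => sq_nonneg _
  rcases hvar_nonneg.eq_or_lt with hvar | hvar
  · have hzero : X =ᵐ[P] fun _ => 0 := by
      filter_upwards [(integral_eq_zero_iff_of_nonneg (fun ω => sq_nonneg (X ω))
        hX.integrable_sq).1 hvar.symm] with ω hω using pow_eq_zero_iff two_ne_zero |>.1 hω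
    simp [← hvar, Measure.map_congr hzero, Measure.map_const, charFun_dirac]
  · set σ := √(∫ ω, X ω ^ 2 ∂P)
    have hσ_pos : 0 < σ := Real.sqrt_pos.2 hvar
    have hσ_sq : σ ^ 2 = ∫ ω, X ω ^ 2 ∂P := Real.sq_sqrt hvar_nonneg
    have hstd := tendsto_charFun_inv_sqrt_mul_pow (P := P) (X := fun ω => σ⁻¹ * X ω)
      (hX.aemeasurable.const_mul _) (by simp [integral_const_mul, hmean])
      (by simp [mul_pow, integral_const_mul, ← hσ_sq, hσ_pos.ne']) (σ * t)
    have hscale (n : ℕ) : σ⁻¹ * ((√n)⁻¹ * (σ * t)) = (√n)⁻¹ * t := by field_simp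
    simp only [charFun_map_mul_comp hX.aemeasurable, hscale] at hstd
    convert hstd using 2
    rw [charFun_gaussianReal, Real.coe_toNNReal _ hvar_nonneg, ← hσ_sq]
    push_cast
    ring_nf

variable [FiniteDimensional ℝ E]

theorem tendsto_map_smul_convPow (μ : Measure E) [IsProbabilityMeasure μ] (G : ProbabilityMeasure E)
    (hμ : ∀ t, MemLp (fun x : E => ⟪t, x⟫) 2 μ) (hmean : ∀ t, ∫ x : E, ⟪t, x⟫ ∂μ = 0)
    (hG : ∀ t, (G : Measure E).map (fun x => ⟪t, x⟫) =
      gaussianReal 0 (∫ x : E, ⟪t, x⟫ ^ 2 ∂μ).toNNReal) :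
    Tendsto (β := ProbabilityMeasure E) (fun n : ℕ => ⟨(convPow μ n).map ((√n)⁻¹ • ·),
      Measure.isProbabilityMeasure_map (by fun_prop)⟩) atTop (𝓝 G) := by
  refine ProbabilityMeasure.tendsto_of_tendsto_charFun fun t => ?_
  have hprojected := tendsto_charFun_pow_gaussianReal (hμ t) (hmean t) 1
  rw [← hG, ← charFun_smul_eq_charFun_map_inner, one_smul] at hprojected
  refine hprojected.congr fun n => ?_
  rw [ProbabilityMeasure.coe_mk, charFun_map_smul, charFun_convPow,
    charFun_smul_eq_charFun_map_inner, mul_one]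

end CentralLimit

namespace DualSDPI

variable {E F F' : Type*} [NormedAddCommGroup E] [InnerProductSpace ℝ E] [MeasurableSpace E]
  [BorelSpace E]
  [NormedAddCommGroup F] [NormedSpace ℝ F] [NormedAddCommGroup F'] [NormedSpace ℝ F']
  {c : ℝ} {μ : Measure E} {X : E →L[ℝ] F} {Y : E →L[ℝ] F'}

lemma map_smul (hμ : DualSDPI c μ X Y) (s : ℝ) : DualSDPI c (μ.map (s • ·)) X Y := by
  rw [map_iff (by fun_prop) X.continuous Y.continuous]
  convert hμ.comp (continuous_const_smul s) (continuous_const_smul s) using 1 <;> ext x <;> simp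

variable [IsProbabilityMeasure μ]

lemma conv [SecondCountableTopology E] {ν : Measure E} [IsProbabilityMeasure ν]
    (hμ : DualSDPI c μ X Y) (hν : DualSDPI c ν X Y) : DualSDPI c (μ.conv ν) X Y := by
  rw [Measure.conv, map_iff (by fun_prop) X.continuous Y.continuous]
  have hadd := (hμ.prod hν X.continuous Y.continuous X.continuous Y.continuous).comp
    (u := fun p : F × F => p.1 + p.2) (v := fun p : F' × F' => p.1 + p.2)
    continuous_add continuous_add
  convert hadd using 1 <;> ext p <;> simp

lemma convPow [SecondCountableTopology E] (hμ : DualSDPI c μ X Y) :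
    ∀ n, DualSDPI c (convPow μ n) X Y
  | 0 => dirac 0
  | n + 1 => (hμ.convPow n).conv hμ

theorem gaussian_of_moments [FiniteDimensional ℝ E] (hSDPI : DualSDPI c μ X Y) (G : Measure E)
    [IsProbabilityMeasure G]
    (hμ : ∀ t, MemLp (fun x : E => ⟪t, x⟫) 2 μ) (hmean : ∀ t, ∫ x : E, ⟪t, x⟫ ∂μ = 0)
    (hG : ∀ t, G.map (fun x => ⟪t, x⟫) = gaussianReal 0 (∫ x : E, ⟪t, x⟫ ^ 2 ∂μ).toNNReal) :
    DualSDPI c G X Y :=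
  of_tendsto (tendsto_map_smul_convPow μ ⟨G, inferInstance⟩ hμ hmean hG) X.continuous Y.continuous
    fun n => (hSDPI.convPow n).map_smul (√n)⁻¹

end DualSDPI

section GaussianReal

lemma gaussianReal_prod_map_linear (m₁ m₂ : ℝ) (v₁ v₂ : NNReal) (a b : ℝ) :
    ((gaussianReal m₁ v₁).prod (gaussianReal m₂ v₂)).map (fun p => a * p.1 + b * p.2) =
      gaussianReal (a * m₁ + b * m₂) (a ^ 2 * v₁ + b ^ 2 * v₂).toNNReal := by
  have hcomp : (fun p : ℝ × ℝ => a * p.1 + b * p.2) =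
      (fun p : ℝ × ℝ => p.1 + p.2) ∘ Prod.map (a * ·) (b * ·) := rfl
  rw [hcomp, ← Measure.map_map (by fun_prop) (by fun_prop), ← Measure.map_prod_map _ _
    (by fun_prop) (by fun_prop), gaussianReal_map_const_mul, gaussianReal_map_const_mul,
    ← Measure.conv, gaussianReal_conv_gaussianReal]
  congr 1
  ext
  simp [Real.coe_toNNReal _ (by positivity : 0 ≤ a ^ 2 * (v₁ : ℝ) + b ^ 2 * v₂)]

lemma sq_add_sqrt_one_sub_sq {r : ℝ} (hr : |r| ≤ 1) : r ^ 2 + √(1 - r ^ 2) ^ 2 = 1 := by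
  rw [Real.sq_sqrt (sub_nonneg.2 ((sq_le_one_iff_abs_le_one r).2 hr)), add_sub_cancel]

lemma gaussChanOut_gaussianReal {r : ℝ} (hr : |r| ≤ 1) (m : ℝ) :
    gaussChanOut r (gaussianReal m 1) = gaussianReal (r * m) 1 := by
  simp [gaussChanOut, gaussianReal_prod_map_linear, sq_add_sqrt_one_sub_sq hr]

end GaussianReal

section SignPair

/-- The law of a pair of signs, each uniform on `{1, -1}`, with correlation `r`. -/
def signPair (r : ℝ) : Measure (EuclideanSpace ℝ (Fin 2)) :=
  ENNReal.ofReal ((1 + r) / 4) • (Measure.dirac !₂[1, 1] + Measure.dirac !₂[-1, -1])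
    + ENNReal.ofReal ((1 - r) / 4) • (Measure.dirac !₂[1, -1] + Measure.dirac !₂[-1, 1])

/-- The law of `(X, r X + √(1 - r²) Z)` for independent standard Gaussians `X` and `Z`. -/
def gaussPair (r : ℝ) : Measure (EuclideanSpace ℝ (Fin 2)) :=
  ((gaussianReal 0 1).prod (gaussianReal 0 1)).map fun p => !₂[p.1, r * p.1 + √(1 - r ^ 2) * p.2]

lemma inner_euclideanSpace_fin_two (t : EuclideanSpace ℝ (Fin 2)) (a b : ℝ) :
    ⟪t, !₂[a, b]⟫ = t 0 * a + t 1 * b := by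
  simp [PiLp.inner_apply, mul_comm]

lemma integrable_signPair (r : ℝ) (f : EuclideanSpace ℝ (Fin 2) → ℝ) :
    Integrable f (signPair r) := by
  have hdirac (x) : Integrable f (Measure.dirac x) := integrable_dirac (by simp)
  exact (((hdirac _).add_measure (hdirac _)).smul_measure ENNReal.ofReal_ne_top).add_measure
    (((hdirac _).add_measure (hdirac _)).smul_measure ENNReal.ofReal_ne_top)

variable {r : ℝ}

lemma isProbabilityMeasure_signPair (hr : |r| ≤ 1) : IsProbabilityMeasure (signPair r) := by
  obtain ⟨hr_lower, hr_upper⟩ := abs_le.1 hr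
  constructor
  simp only [signPair, Measure.add_apply, Measure.smul_apply, measure_univ, smul_eq_mul,
    one_add_one_eq_two]
  rw [← add_mul, ← ENNReal.ofReal_add (by linarith) (by linarith),
    show (1 + r) / 4 + (1 - r) / 4 = 2⁻¹ by ring, ENNReal.ofReal_inv_of_pos two_pos]
  simp [ENNReal.inv_mul_cancel]

lemma integral_signPair (hr : |r| ≤ 1) (f : EuclideanSpace ℝ (Fin 2) → ℝ) :
    ∫ x, f x ∂(signPair r) = (1 + r) / 4 * (f !₂[1, 1] + f !₂[-1, -1])
      + (1 - r) / 4 * (f !₂[1, -1] + f !₂[-1, 1]) := by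
  obtain ⟨hr_lower, hr_upper⟩ := abs_le.1 hr
  have hdirac (x) : Integrable f (Measure.dirac x) := integrable_dirac (by simp)
  obtain ⟨hint_eq, hint_ne⟩ := integrable_add_measure.1 (integrable_signPair r f)
  rw [signPair, integral_add_measure hint_eq hint_ne, integral_smul_measure,
    integral_smul_measure, integral_add_measure (hdirac _) (hdirac _),
    integral_add_measure (hdirac _) (hdirac _)]
  simp [ENNReal.toReal_ofReal (by linarith : 0 ≤ (1 + r) / 4),
    ENNReal.toReal_ofReal (by linarith : 0 ≤ (1 - r) / 4)]

lemma dualSDPI_signPair (hr : |r| ≤ 1) :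
    DualSDPI (r ^ 2) (signPair r) (EuclideanSpace.proj (𝕜 := ℝ) (0 : Fin 2))
      (EuclideanSpace.proj (𝕜 := ℝ) (1 : Fin 2)) := by
  intro φ g
  have htwo_point := two_point_sdpi hr (Real.exp_pos (φ 1)) (Real.exp_pos (φ (-1))) (g 1) (g (-1))
  simp only [entropyExp, integral_signPair hr]
  rw [Real.log_exp, Real.log_exp] at htwo_point
  have haverage (x y : ℝ) : (1 + r) / 4 * (x + y) + (1 - r) / 4 * (x + y) = (x + y) / 2 := by ring
  simp only [Function.comp_apply, PiLp.proj_apply, Matrix.cons_val_zero, Matrix.cons_val_one,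
    add_comm (Real.exp (g (-1))), haverage]
  linarith

lemma gaussPair_map_inner (hr : |r| ≤ 1) (t : EuclideanSpace ℝ (Fin 2)) :
    (gaussPair r).map (fun x => ⟪t, x⟫) =
      gaussianReal 0 (∫ x, ⟪t, x⟫ ^ 2 ∂(signPair r)).toNNReal := by
  rw [gaussPair, Measure.map_map (by fun_prop) (by fun_prop), integral_signPair hr]
  have hlinear : (fun x => ⟪t, x⟫) ∘ (fun p : ℝ × ℝ => !₂[p.1, r * p.1 + √(1 - r ^ 2) * p.2]) =
      fun p => (t 0 + r * t 1) * p.1 + (√(1 - r ^ 2) * t 1) * p.2 := by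
    ext p
    simp only [Function.comp_apply, inner_euclideanSpace_fin_two]
    ring
  rw [hlinear, gaussianReal_prod_map_linear]
  congr 1
  · simp
  · simp only [inner_euclideanSpace_fin_two, NNReal.coe_one]
    congr 1
    linear_combination t 1 ^ 2 * sq_add_sqrt_one_sub_sq hr

theorem dualSDPI_gaussian_channel (hr : |r| ≤ 1) :
    DualSDPI (r ^ 2) ((gaussianReal 0 1).prod (gaussianReal 0 1)) Prod.fst
      fun p => r * p.1 + √(1 - r ^ 2) * p.2 := by
  have := isProbabilityMeasure_signPair hr
  have hG : DualSDPI (r ^ 2) (gaussPair r) (EuclideanSpace.proj (𝕜 := ℝ) (0 : Fin 2))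
      (EuclideanSpace.proj (𝕜 := ℝ) (1 : Fin 2)) := by
    have : IsProbabilityMeasure (gaussPair r) :=
      Measure.isProbabilityMeasure_map (by fun_prop)
    refine (dualSDPI_signPair hr).gaussian_of_moments _ (fun t => ?_) (fun t => ?_)
      (gaussPair_map_inner hr)
    · exact (memLp_two_iff_integrable_sq (by fun_prop)).2 (integrable_signPair r _)
    · rw [integral_signPair hr]
      simp only [inner_euclideanSpace_fin_two]
      ring
  exact (DualSDPI.map_iff (by fun_prop) (by fun_prop) (by fun_prop)).1 hG

end SignPair

section LogLikelihood

variable {α : Type*} [MeasurableSpace α] {μ ν : Measure α}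

lemma klDiv_eq_ofReal_integral_llr [IsProbabilityMeasure μ] [IsProbabilityMeasure ν] (hμν : μ ≪ ν)
    (hllr : Integrable (llr μ ν) μ) : klDiv μ ν = ENNReal.ofReal (∫ x, llr μ ν x ∂μ) := by
  simp [klDiv_of_ac_of_integrable hμν hllr]

lemma integral_le_integral_llr_add_log [IsProbabilityMeasure μ] [IsProbabilityMeasure ν]
    (hμν : μ ≪ ν) (hllr : Integrable (llr μ ν) μ) {f : α → ℝ} (hfμ : Integrable f μ)
    (hfν : Integrable (fun x => Real.exp (f x)) ν) :
    ∫ x, f x ∂μ ≤ ∫ x, llr μ ν x ∂μ + Real.log (∫ x, Real.exp (f x) ∂ν) := by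
  have := isProbabilityMeasure_tilted hfν
  have hgibbs := integral_llr_add_sub_measure_univ_nonneg
    (hμν.trans (absolutelyContinuous_tilted hfν)) (integrable_llr_tilted_right hμν hfμ hllr hfν)
  rw [integral_llr_tilted_right hμν hfμ hfν hllr] at hgibbs
  simp only [probReal_univ] at hgibbs
  linarith

/-- The truncation of `x` to the interval `[R⁻¹, R]`, whose logarithm is bounded. -/
def logClamp (R x : ℝ) : ℝ := max R⁻¹ (min x R)

lemma logClamp_mem_Icc {R : ℝ} (hR : 1 ≤ R) (x : ℝ) : logClamp R x ∈ Set.Icc R⁻¹ R :=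
  ⟨le_max_left _ _, max_le ((inv_le_one_of_one_le₀ hR).trans hR) (min_le_right _ _)⟩

lemma logClamp_pos {R : ℝ} (hR : 1 ≤ R) (x : ℝ) : 0 < logClamp R x :=
  (inv_pos.2 (one_pos.trans_le hR)).trans_le (logClamp_mem_Icc hR x).1

lemma abs_log_logClamp_le {R : ℝ} (hR : 1 ≤ R) (x : ℝ) :
    |Real.log (logClamp R x)| ≤ Real.log R := by
  have hR₀ : 0 < R := one_pos.trans_le hR
  obtain ⟨hlower, hupper⟩ := logClamp_mem_Icc hR x
  refine abs_le.2 ⟨?_, Real.log_le_log (logClamp_pos hR x) hupper⟩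
  rw [← Real.log_inv]
  exact Real.log_le_log (inv_pos.2 hR₀) hlower

lemma measurable_logClamp (R : ℝ) : Measurable (logClamp R) := by
  unfold logClamp
  fun_prop

lemma integrable_logClamp (μ : Measure α) [IsFiniteMeasure μ] {R : ℝ}
    (hR : 1 ≤ R) {f : α → ℝ} (hf : Measurable f) :
    Integrable (fun x => logClamp R (f x)) μ :=
  .of_bound ((measurable_logClamp R).comp hf).aestronglyMeasurable R <| ae_of_all _ fun _ =>
    (Real.norm_of_nonneg (logClamp_pos hR _).le).trans_le (logClamp_mem_Icc hR _).2

lemma integrable_log_logClamp (μ : Measure α) [IsFiniteMeasure μ] {R : ℝ}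
    (hR : 1 ≤ R) {f : α → ℝ} (hf : Measurable f) :
    Integrable (fun x => Real.log (logClamp R (f x))) μ :=
  .of_bound ((measurable_logClamp R).comp hf).log.aestronglyMeasurable (Real.log R) <|
    ae_of_all _ fun x => abs_log_logClamp_le hR (f x)

lemma tendsto_logClamp {x : ℝ} (hx : 0 ≤ x) : Tendsto (logClamp · x) atTop (𝓝 x) := by
  have hmin : Tendsto (fun R => min x R) atTop (𝓝 x) :=
    tendsto_const_nhds.congr' ((eventually_ge_atTop x).mono fun R hR => (min_eq_left hR).symm)
  simpa only [logClamp, max_eq_right hx] using tendsto_inv_atTop_zero.max hmin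

-- `logClamp R x` lies between `1` and `x`, so `log (logClamp R x)` has the sign of `x - 1`.
lemma klFun_logClamp_le {R : ℝ} (hR : 1 ≤ R) (x : ℝ) :
    klFun (logClamp R x) ≤ x * Real.log (logClamp R x) + (1 - logClamp R x) := by
  have hinv : R⁻¹ ≤ 1 := inv_le_one_of_one_le₀ hR
  suffices h : (logClamp R x - x) * Real.log (logClamp R x) ≤ 0 by
    rw [klFun_apply]
    linarith
  rcases lt_or_ge x R⁻¹ with hlow | hlow
  · rw [logClamp, min_eq_left (by linarith), max_eq_left hlow.le, Real.log_inv]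
    exact mul_nonpos_of_nonneg_of_nonpos (by linarith) (neg_nonpos.2 (Real.log_nonneg hR))
  rcases le_or_gt x R with hupp | hupp
  · rw [logClamp, min_eq_left hupp, max_eq_right hlow, sub_self, zero_mul]
  · rw [logClamp, min_eq_right hupp.le, max_eq_right (by linarith)]
    exact mul_nonpos_of_nonpos_of_nonneg (by linarith) (Real.log_nonneg hR)

lemma lintegral_klFun_logClamp_le [IsFiniteMeasure μ] [IsProbabilityMeasure ν]
    (hμν : μ ≪ ν) {R : ℝ} (hR : 1 ≤ R) :
    ∫⁻ x, ENNReal.ofReal (klFun (logClamp R (μ.rnDeriv ν x).toReal)) ∂ν ≤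
      ENNReal.ofReal (∫ x, Real.log (logClamp R (μ.rnDeriv ν x).toReal) ∂μ
        + (1 - ∫ x, logClamp R (μ.rnDeriv ν x).toReal ∂ν)) := by
  have ht_int := integrable_logClamp ν hR (μ.measurable_rnDeriv ν).ennreal_toReal
  have hmass_int : Integrable (fun x => 1 - logClamp R (μ.rnDeriv ν x).toReal) ν :=
    (integrable_const 1).sub ht_int
  have hlog_int := integrable_log_logClamp μ hR (μ.measurable_rnDeriv ν).ennreal_toReal
  have hdens_int := (integrable_rnDeriv_smul_iff hμν).2 hlog_int
  have hnonneg (x : α) : 0 ≤ klFun (logClamp R (μ.rnDeriv ν x).toReal) :=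
    klFun_nonneg (logClamp_pos hR _).le
  have hkl_le (x : α) := klFun_logClamp_le hR (μ.rnDeriv ν x).toReal
  have hkl_int : Integrable (fun x => klFun (logClamp R (μ.rnDeriv ν x).toReal)) ν :=
    (hdens_int.add hmass_int).mono' (by unfold logClamp klFun; fun_prop) <|
      ae_of_all _ fun x => (Real.norm_of_nonneg (hnonneg x)).trans_le (hkl_le x)
  rw [← ofReal_integral_eq_lintegral_ofReal hkl_int (ae_of_all _ hnonneg)]
  refine ENNReal.ofReal_le_ofReal
    ((integral_mono hkl_int (hdens_int.add hmass_int) hkl_le).trans_eq ?_)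
  rw [integral_add' hdens_int hmass_int, integral_rnDeriv_smul hμν,
    integral_sub (integrable_const 1) ht_int]
  simp

end LogLikelihood

section DonskerVaradhan

variable {α : Type*} [TopologicalSpace α] [MeasurableSpace α] [BorelSpace α]

lemma exists_bcf_seq_tendsto_ae [NormalSpace α] (μ : Measure α) [IsFiniteMeasure μ]
    [μ.WeaklyRegular] {f : α → ℝ} (hf : Measurable f) {C : ℝ} (hC : ∀ x, |f x| ≤ C) :
    ∃ F : ℕ → α →ᵇ ℝ, (∀ n x, |F n x| ≤ C) ∧
      ∀ᵐ x ∂μ, Tendsto (fun n => F n x) atTop (𝓝 (f x)) := by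
  have hLp : MemLp f 1 μ := MemLp.of_bound hf.aestronglyMeasurable C (ae_of_all _ hC)
  choose g hg _ using fun n : ℕ =>
    hLp.exists_boundedContinuous_eLpNorm_sub_le ENNReal.one_ne_top
      (ENNReal.inv_ne_zero.2 (ENNReal.natCast_ne_top n))
  have hlim : Tendsto (fun n => eLpNorm (⇑(g n) - f) 1 μ) atTop (𝓝 0) :=
    tendsto_of_tendsto_of_tendsto_of_le_of_le tendsto_const_nhds
      ENNReal.tendsto_inv_nat_nhds_zero (fun _ => zero_le)
      fun n => (eLpNorm_sub_comm _ _ _ _).trans_le (hg n)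
  obtain ⟨k, -, hk⟩ := (tendstoInMeasure_of_tendsto_eLpNorm one_ne_zero
    (fun n => (g n).continuous.aestronglyMeasurable) hf.aestronglyMeasurable
    hlim).exists_seq_tendsto_ae
  refine ⟨fun n => .const α (-C) ⊔ (g (k n) ⊓ .const α C), fun n x => abs_le.2 ⟨?_, ?_⟩, ?_⟩
  · exact le_max_left _ _
  · exact max_le (neg_le_self ((abs_nonneg _).trans (hC x))) (min_le_right _ _)
  · filter_upwards [hk] with x hx
    obtain ⟨hlower, hupper⟩ := abs_le.1 (hC x)
    have hclamp := (tendsto_const_nhds (x := -C)).max (hx.min (tendsto_const_nhds (x := C)))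
    rwa [min_eq_left hupper, max_eq_right hlower] at hclamp

variable [TopologicalSpace.PseudoMetrizableSpace α] {μ ν : Measure α}
  [IsProbabilityMeasure μ] [IsProbabilityMeasure ν] {K : ℝ}

lemma integral_le_add_log_integral_exp_of_bcf
    (h : ∀ g : α →ᵇ ℝ, ∫ x, g x ∂μ ≤ K + Real.log (∫ x, Real.exp (g x) ∂ν))
    {f : α → ℝ} (hf : Measurable f) {C : ℝ} (hC : ∀ x, |f x| ≤ C) :
    ∫ x, f x ∂μ ≤ K + Real.log (∫ x, Real.exp (f x) ∂ν) := by
  obtain ⟨F, hFC, hF⟩ := exists_bcf_seq_tendsto_ae (μ + ν) hf hC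
  obtain ⟨hFμ, hFν⟩ := ae_add_measure_iff.1 hF
  have hleft : Tendsto (fun n => ∫ x, F n x ∂μ) atTop (𝓝 (∫ x, f x ∂μ)) :=
    tendsto_integral_of_dominated_convergence (fun _ => C)
      (fun n => (F n).continuous.aestronglyMeasurable) (integrable_const _)
      (fun n => ae_of_all _ (hFC n)) hFμ
  have hexp_le {x y : ℝ} (hy : |y| ≤ x) : ‖Real.exp y‖ ≤ Real.exp x := by
    rw [Real.norm_eq_abs, Real.abs_exp]
    exact Real.exp_le_exp.2 ((le_abs_self y).trans hy)
  have hright : Tendsto (fun n => ∫ x, Real.exp (F n x) ∂ν) atTop (𝓝 (∫ x, Real.exp (f x) ∂ν)) :=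
    tendsto_integral_of_dominated_convergence (fun _ => Real.exp C)
      (fun n => (expBCF (F n)).continuous.aestronglyMeasurable) (integrable_const _)
      (fun n => ae_of_all _ fun x => hexp_le (hFC n x)) (hFν.mono fun x hx => hx.rexp)
  have hpos : 0 < ∫ x, Real.exp (f x) ∂ν := integral_exp_pos <|
    .of_bound (by fun_prop) (Real.exp C) (ae_of_all _ fun x => hexp_le (hC x))
  exact le_of_tendsto_of_tendsto' hleft ((hright.log hpos.ne').const_add K) fun n => h (F n)

lemma integral_log_logClamp_add_le
    (h : ∀ g : α →ᵇ ℝ, ∫ x, g x ∂μ ≤ K + Real.log (∫ x, Real.exp (g x) ∂ν))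
    {R : ℝ} (hR : 1 ≤ R) {f : α → ℝ} (hf : Measurable f) :
    ∫ x, Real.log (logClamp R (f x)) ∂μ + (1 - ∫ x, logClamp R (f x) ∂ν) ≤ K := by
  have hvariational := integral_le_add_log_integral_exp_of_bcf h
    ((measurable_logClamp R).comp hf).log fun x => abs_log_logClamp_le hR (f x)
  have hexp_log (x : α) : Real.exp (Real.log (logClamp R (f x))) = logClamp R (f x) :=
    Real.exp_log (logClamp_pos hR _)
  have hpos : 0 < ∫ x, logClamp R (f x) ∂ν := by
    have := integral_exp_pos (μ := ν) (f := fun x => Real.log (logClamp R (f x)))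
      (by simpa only [hexp_log] using integrable_logClamp ν hR hf)
    simpa only [hexp_log] using this
  simp only [Function.comp_apply, hexp_log] at hvariational
  linarith [Real.log_le_sub_one_of_pos hpos]

theorem klDiv_le_of_forall_bcf (hμν : μ ≪ ν)
    (h : ∀ g : α →ᵇ ℝ, ∫ x, g x ∂μ ≤ K + Real.log (∫ x, Real.exp (g x) ∂ν)) :
    klDiv μ ν ≤ ENNReal.ofReal K := by
  have hlim (x : α) : Tendsto
      (fun n : ℕ => ENNReal.ofReal (klFun (logClamp (n + 1) (μ.rnDeriv ν x).toReal))) atTop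
      (𝓝 (ENNReal.ofReal (klFun (μ.rnDeriv ν x).toReal))) :=
    ENNReal.tendsto_ofReal <| (continuous_klFun.tendsto _).comp <|
      (tendsto_logClamp ENNReal.toReal_nonneg).comp <|
        tendsto_natCast_atTop_atTop.atTop_add tendsto_const_nhds
  calc klDiv μ ν
      = ∫⁻ x, ENNReal.ofReal (klFun (μ.rnDeriv ν x).toReal) ∂ν :=
        klDiv_eq_lintegral_klFun_of_ac hμν
    _ = ∫⁻ x, liminf (fun n : ℕ =>
          ENNReal.ofReal (klFun (logClamp (n + 1) (μ.rnDeriv ν x).toReal))) atTop ∂ν :=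
        lintegral_congr fun x => (hlim x).liminf_eq.symm
    _ ≤ liminf (fun n : ℕ => ∫⁻ x, ENNReal.ofReal
          (klFun (logClamp (n + 1) (μ.rnDeriv ν x).toReal)) ∂ν) atTop :=
        lintegral_liminf_le fun n => by unfold logClamp klFun; fun_prop
    _ ≤ ENNReal.ofReal K :=
        liminf_le_of_frequently_le' <| Frequently.of_forall fun n =>
          have hn : (1 : ℝ) ≤ n + 1 := le_add_of_nonneg_left n.cast_nonneg
          (lintegral_klFun_logClamp_le hμν hn).trans <| ENNReal.ofReal_le_ofReal <|
            integral_log_logClamp_add_le h hn (μ.measurable_rnDeriv ν).ennreal_toReal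

end DonskerVaradhan

section Contraction

variable {α β γ : Type*} [TopologicalSpace α] [MeasurableSpace α] [OpensMeasurableSpace α]
  [FirstCountableTopology α] [TopologicalSpace γ] [MeasurableSpace γ] [OpensMeasurableSpace γ]
  [SecondCountableTopology γ] [TopologicalSpace β] {μ : Measure α} {ν : Measure γ}
  [IsProbabilityMeasure μ] [IsProbabilityMeasure ν] {T : α × γ → β}
  {c : ℝ}

lemma DualSDPI.mul_log_integral_exp_integralSnd_le (h : DualSDPI c (μ.prod ν) Prod.fst T)
    (hc : 0 < c) (hT : Continuous T) (g : β →ᵇ ℝ) :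
    c * Real.log (∫ x, Real.exp (c⁻¹ * ∫ z, g (T (x, z)) ∂ν) ∂μ) ≤
      Real.log (∫ p, Real.exp (g (T p)) ∂(μ.prod ν)) := by
  set gT : α × γ →ᵇ ℝ := g.compContinuous ⟨T, hT⟩
  set φ : α →ᵇ ℝ := c⁻¹ • integralSnd ν gT
  have hφ (x : α) : c * φ x = ∫ z, g (T (x, z)) ∂ν := by
    simp [φ, gT, mul_inv_cancel_left₀ hc.ne']
  have hfst (f : α → ℝ) : ∫ p, f p.1 ∂(μ.prod ν) = ∫ x, f x ∂μ := by
    simpa using integral_fun_fst (μ := μ) (ν := ν) f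
  have hcross : ∫ p, Real.exp (φ p.1) * g (T p) ∂(μ.prod ν) =
      c * ∫ x, φ x * Real.exp (φ x) ∂μ := by
    rw [integral_prod _ (((expBCF φ).compContinuous ⟨_, continuous_fst⟩ * gT).integrable _),
      ← integral_const_mul]
    refine integral_congr_ae (ae_of_all _ fun x => ?_)
    simp only [integral_const_mul, ← hφ]
    ring
  have hdual := h φ g
  simp only [entropyExp, Function.comp_apply] at hdual
  rw [hcross, hfst fun x => φ x * Real.exp (φ x), hfst fun x => Real.exp (φ x)] at hdual
  have hpos := integral_exp_bcf_pos μ φ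
  refine le_of_mul_le_mul_left ?_ hpos
  change (∫ x, Real.exp (φ x) ∂μ) * (c * Real.log (∫ x, Real.exp (φ x) ∂μ)) ≤ _
  linarith

theorem DualSDPI.klDiv_map_prod_le [MeasurableSpace β] [BorelSpace β]
    [TopologicalSpace.PseudoMetrizableSpace β] (h : DualSDPI c (μ.prod ν) Prod.fst T)
    (hc : 0 < c) (hT : Continuous T) (Q : Measure α) [IsProbabilityMeasure Q] :
    klDiv ((Q.prod ν).map T) ((μ.prod ν).map T) ≤ ENNReal.ofReal c * klDiv Q μ := by
  by_cases hQ : klDiv Q μ = ⊤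
  · simp [hQ, hc]
  obtain ⟨hac, hllr⟩ := klDiv_ne_top_iff.1 hQ
  have hprob (P : Measure α) [IsProbabilityMeasure P] :
      IsProbabilityMeasure ((P.prod ν).map T) :=
    Measure.isProbabilityMeasure_map hT.measurable.aemeasurable
  have := hprob Q
  have := hprob μ
  rw [klDiv_eq_ofReal_integral_llr hac hllr, ← ENNReal.ofReal_mul hc.le]
  refine klDiv_le_of_forall_bcf
    ((hac.prod Measure.AbsolutelyContinuous.rfl).map hT.measurable) fun g => ?_
  set gT : α × γ →ᵇ ℝ := g.compContinuous ⟨T, hT⟩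
  set φ : α →ᵇ ℝ := c⁻¹ • integralSnd ν gT
  have hgibbs := integral_le_integral_llr_add_log hac hllr (φ.integrable Q)
    ((expBCF φ).integrable μ)
  calc ∫ y, g y ∂((Q.prod ν).map T)
      = ∫ p, gT p ∂(Q.prod ν) :=
        integral_map hT.measurable.aemeasurable g.continuous.aestronglyMeasurable
    _ = c * ∫ x, φ x ∂Q := by
        rw [integral_prod _ (gT.integrable _), ← integral_const_mul]
        simp [φ, mul_inv_cancel_left₀ hc.ne']
    _ ≤ c * (∫ x, llr Q μ x ∂Q + Real.log (∫ x, Real.exp (φ x) ∂μ)) := by gcongr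
    _ ≤ c * ∫ x, llr Q μ x ∂Q + Real.log (∫ p, Real.exp (gT p) ∂(μ.prod ν)) := by
        rw [mul_add]
        gcongr
        exact h.mul_log_integral_exp_integralSnd_le hc hT g
    _ = c * ∫ x, llr Q μ x ∂Q + Real.log (∫ y, expBCF g y ∂((μ.prod ν).map T)) := by
        rw [integral_map hT.measurable.aemeasurable (expBCF g).continuous.aestronglyMeasurable]
        rfl

end Contraction

section GaussianShift

lemma gaussianReal_eq_tilted (m : ℝ) :
    gaussianReal m 1 = (gaussianReal 0 1).tilted (fun x => m * x) := by
  have hmgf : ∫ x, Real.exp (m * x) ∂(gaussianReal 0 1) = Real.exp (m ^ 2 / 2) := by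
    simpa [mgf] using congrFun (mgf_id_gaussianReal (μ := 0) (v := 1)) m
  rw [Measure.tilted, hmgf, gaussianReal_of_var_ne_zero _ one_ne_zero,
    gaussianReal_of_var_ne_zero _ one_ne_zero,
    ← withDensity_mul _ (measurable_gaussianPDF _ _) (by fun_prop)]
  congr 1
  ext x
  simp only [Pi.mul_apply, gaussianPDF, gaussianPDFReal, NNReal.coe_one]
  rw [← ENNReal.ofReal_mul (by positivity), ← Real.exp_sub, mul_assoc _ (Real.exp _),
    ← Real.exp_add]
  ring_nf

lemma klDiv_gaussianReal (m : ℝ) :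
    klDiv (gaussianReal m 1) (gaussianReal 0 1) = ENNReal.ofReal (m ^ 2 / 2) := by
  have hac : gaussianReal m 1 ≪ gaussianReal 0 1 := by
    rw [gaussianReal_eq_tilted]
    exact tilted_absolutelyContinuous _ _
  have hmgf : Real.log (∫ x, Real.exp (m * x) ∂(gaussianReal 0 1)) = m ^ 2 / 2 := by
    simpa [cgf, mgf] using cgf_gaussianReal (p := gaussianReal 0 1) (X := id) Measure.map_id m
  have hllr : llr (gaussianReal m 1) (gaussianReal 0 1) =ᵐ[gaussianReal m 1]
      fun x => m * x - m ^ 2 / 2 := by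
    have hdens := log_rnDeriv_tilted_left_self (integrable_exp_mul_gaussianReal
      (μ := 0) (v := 1) m)
    rw [← gaussianReal_eq_tilted, hmgf] at hdens
    exact hac.ae_le hdens
  have hid : Integrable (fun x => m * x) (gaussianReal m 1) :=
    (memLp_id_gaussianReal 1).integrable le_rfl |>.const_mul m
  rw [klDiv_eq_ofReal_integral_llr hac ((hid.sub (integrable_const _)).congr hllr.symm),
    integral_congr_ae hllr, integral_sub hid (integrable_const _), integral_const_mul,
    integral_id_gaussianReal, integral_const, probReal_univ, one_smul]
  ring_nf

end GaussianShift

lemma klM_eq_klDiv (P R : Measure ℝ) [IsProbabilityMeasure P] [IsProbabilityMeasure R] :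
    klM P R = klDiv P R := by
  unfold klM
  split_ifs with h
  · exact (klDiv_eq_ofReal_integral_llr h.1 h.2).symm
  · exact (not_ne_iff.1 (mt klDiv_ne_top_iff.1 h)).symm

lemma klDiv_gaussChanOut_le {r : ℝ} (hr : |r| ≤ 1) (Q : Measure ℝ) [IsProbabilityMeasure Q] :
    klDiv (gaussChanOut r Q) (gaussianReal 0 1) ≤
      ENNReal.ofReal (r ^ 2) * klDiv Q (gaussianReal 0 1) := by
  rcases eq_or_ne r 0 with rfl | hr₀
  · simp [gaussChanOut, Measure.map_snd_prod, klDiv_self]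
  · have hout : gaussChanOut r (gaussianReal 0 1) = gaussianReal 0 1 := by
      simpa using gaussChanOut_gaussianReal hr 0
    have := (dualSDPI_gaussian_channel hr).klDiv_map_prod_le (by positivity) (by fun_prop) Q
    rwa [← gaussChanOut, ← gaussChanOut, hout] at this

theorem gaussian_sStar_general {ρ : ℝ} (hρ : |ρ| ≤ 1) :
    sSup { r : ℝ≥0∞ | ∃ Q : Measure ℝ, IsProbabilityMeasure Q ∧
        0 < klM Q (gaussianReal 0 1) ∧ klM Q (gaussianReal 0 1) < ⊤ ∧
        r = klM (gaussChanOut ρ Q) (gaussianReal 0 1) / klM Q (gaussianReal 0 1) }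
      = ENNReal.ofReal (ρ ^ 2) := by
  refine le_antisymm (sSup_le ?_) (le_sSup ⟨gaussianReal 1 1, inferInstance, ?_⟩)
  · rintro _ ⟨Q, hQ, -, -, rfl⟩
    have : IsProbabilityMeasure (gaussChanOut ρ Q) :=
      Measure.isProbabilityMeasure_map (by fun_prop)
    rw [klM_eq_klDiv, klM_eq_klDiv]
    exact ENNReal.div_le_of_le_mul (klDiv_gaussChanOut_le hρ Q)
  · rw [gaussChanOut_gaussianReal hρ, klM_eq_klDiv, klM_eq_klDiv, klDiv_gaussianReal,
      klDiv_gaussianReal, ← ENNReal.ofReal_div_of_pos (by norm_num)]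
    refine ⟨by norm_num, ENNReal.ofReal_lt_top, ?_⟩
    ring_nf

/-- For the jointly Gaussian pair with unit variances and correlation
`ρ ∈ (0,1)` — i.e. `X ~ N(0,1)` and `Y = ρX + √(1−ρ²)Z` with `Z ~ N(0,1)` independent
of `X`, so that `P_Y = N(0,1)` — the supremum of `D(Q_Y ‖ P_Y)/D(Q ‖ P_X)` over all
probability measures `Q` on `ℝ` with `0 < D(Q ‖ P_X) < ∞` equals `ρ²`; that is,
`s*(X;Y) = ρ²` (and by symmetry `s*(Y;X) = ρ²`, so `ρ*(X,Y) = ρ²`). -/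
theorem gaussian_sStar (hρ0 : 0 < ρ) (hρ1 : ρ < 1) :
    sSup { r : ℝ≥0∞ | ∃ Q : Measure ℝ, IsProbabilityMeasure Q ∧
        0 < klM Q (gaussianReal 0 1) ∧ klM Q (gaussianReal 0 1) < ⊤ ∧
        r = klM (gaussChanOut ρ Q) (gaussianReal 0 1) / klM Q (gaussianReal 0 1) }
      = ENNReal.ofReal (ρ ^ 2) :=
  gaussian_sStar_general (abs_le.2 ⟨by linarith, hρ1.le⟩)

end
end
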